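/- arXiv:2006.15944 — 4 statements merged into one kernel-verified Lean document; each statement's English description precedes it below -/
import Mathlib

section
/- For every r₀ > 0 and every a with 0 < a < ((α+2)/2)^{1/α}, let b > 2a/α be the real number determined by (1/2)(b − 2a/α)² = a² (((N−2)α−2)/(α²(α+2))) (α+2 − 2a^α), and let u be the (maximal) solution of u'' + ((N−1)/r)u' + |u|^α u = 0 with u(r₀) = a β^{1/α} r₀^{−2/α} and u'(r₀) = −b β^{1/α} r₀^{−2/α−1}; then u extends to a C² solution on all of (0,∞) which is sign-changing and singular at 0: u takes both strictly positive and strictly negative values, there exists ε ∈ {+1,−1} with r^{2/α}u(r) → εβ^{1/α} as r→0, |u(r)| ≤ C r^{−(N−2−2/α)} for r > 1 for some constant C, and for every R > 0 there exists r > R with u(r) = 0. Moreover distinct pairs (r₀, a) yield distinct solutions u, so this is a genuine two-parameter family of sign-changing singular radial stationary solutions of the nonlinear heat equation. -/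
open Filter


open Set in
lemma ode_step (F : ℝ × ℝ → ℝ × ℝ)
    (hL : ∀ R : ℝ, ∃ K : NNReal, LipschitzOnWith K F (Metric.closedBall 0 R)) (x0 : ℝ × ℝ)
    (T B : ℝ) (hT : 0 < T)
    (hB : ∀ ρ, 0 < ρ → ρ ≤ T → ∀ γ : ℝ → ℝ × ℝ, γ 0 = x0 → ContinuousOn γ (Icc (-ρ) ρ) →
      (∀ t ∈ Ioo (-ρ) ρ, HasDerivAt γ (F (γ t)) t) → ∀ t ∈ Icc (-ρ) ρ, ‖γ t‖ ≤ B) :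
    ∃ γ : ℝ → ℝ × ℝ, γ 0 = x0 ∧ ContinuousOn γ (Icc (-T) T) ∧
      ∀ t ∈ Ioo (-T) T, HasDerivAt γ (F (γ t)) t := by
  set R : ℝ := max B ‖x0‖ + 1 with hR
  have hR0 : 0 ≤ R := by positivity
  have hRR : -R ≤ R := by linarith
  obtain ⟨K, hK⟩ := hL R
  let p : ℝ × ℝ → ℝ × ℝ := fun z => ((projIcc (-R) R hRR z.1 : ℝ), (projIcc (-R) R hRR z.2 : ℝ))
  have hp1 : LipschitzWith 1 (fun x : ℝ => (projIcc (-R) R hRR x : ℝ)) := by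
    have := (LipschitzWith.subtype_val (Icc (-R) R)).comp (LipschitzWith.projIcc hRR)
    rw [mul_one] at this
    exact this
  have hp : LipschitzWith 1 p := by
    have := (hp1.comp LipschitzWith.prod_fst).prodMk (hp1.comp LipschitzWith.prod_snd)
    simpa using this
  have hpm : ∀ z, p z ∈ Metric.closedBall (0 : ℝ × ℝ) R := by
    intro z
    rw [mem_closedBall_zero_iff, Prod.norm_def]
    have h1 := (projIcc (-R) R hRR z.1).2
    have h2 := (projIcc (-R) R hRR z.2).2
    exact max_le (abs_le.2 h1) (abs_le.2 h2)
  have hpid : ∀ z : ℝ × ℝ, ‖z‖ ≤ R → p z = z := by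
    intro z hz
    rw [Prod.norm_def] at hz
    have h1 := abs_le.1 ((le_max_left _ _).trans hz)
    have h2 := abs_le.1 ((le_max_right _ _).trans hz)
    ext
    · simp only [p]; rw [projIcc_of_mem hRR h1]
    · simp only [p]; rw [projIcc_of_mem hRR h2]
  have hG : LipschitzWith K (F ∘ p) := by
    have := hK.comp (hp.lipschitzOnWith (s := univ)) (fun z _ => hpm z)
    simpa using this
  obtain ⟨M, hM⟩ : ∃ M : ℝ, ∀ z ∈ Metric.closedBall (0 : ℝ × ℝ) R, ‖F z‖ ≤ M :=
    (isCompact_closedBall _ _).exists_bound_of_continuousOn hK.continuousOn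
  have hM0 : 0 ≤ M := (norm_nonneg _).trans (hM _ (hpm 0))
  have h0 : (0 : ℝ) ∈ Icc (-T) T := ⟨by linarith, hT.le⟩
  have hPL : IsPicardLindelof (fun _ => F ∘ p) (⟨0, h0⟩ : Icc (-T) T) x0 (⟨M * T, by positivity⟩ : NNReal) 0
      ⟨M, hM0⟩ K := by
    apply IsPicardLindelof.of_time_independent
    · intro x _
      exact hM _ (hpm x)
    · exact hG.lipschitzOnWith
    · simp only [sub_zero, zero_sub, neg_neg, max_self, NNReal.coe_zero]
      exact le_rfl
  obtain ⟨γ, hγ0, hγ⟩ := hPL.exists_eq_forall_mem_Icc_hasDerivWithinAt₀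
  have hγ0 : γ 0 = x0 := hγ0
  have hcont : ContinuousOn γ (Icc (-T) T) := HasDerivWithinAt.continuousOn hγ
  have hder : ∀ t ∈ Ioo (-T) T, HasDerivAt γ (F (p (γ t))) t := fun t ht =>
    (hγ t (Ioo_subset_Icc_self ht)).hasDerivAt (Icc_mem_nhds ht.1 ht.2)
  have hx0R : ‖x0‖ < R := by have := le_max_right B ‖x0‖; linarith
  have hBR : B < R := by have := le_max_left B ‖x0‖; linarith
  have key : ∀ t ∈ Icc (-T) T, ‖γ t‖ < R := by
    by_contra hcon
    push Not at hcon
    let S : Set ℝ := Icc (-T) T ∩ {t | R ≤ ‖γ t‖}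
    have hSc : IsClosed S := by
      have := hcont.norm.preimage_isClosed_of_isClosed isClosed_Icc (isClosed_Ici (a := R))
      exact this
    have hScp : IsCompact S := isCompact_Icc.of_isClosed_subset hSc inter_subset_left
    obtain ⟨t0, ht0, ht0R⟩ := hcon
    obtain ⟨t1, ht1, hmin⟩ := hScp.exists_isMinOn ⟨t0, ht0, ht0R⟩ continuous_abs.continuousOn
    have ht1T : |t1| ≤ T := abs_le.2 ht1.1
    have hpos : 0 < |t1| := by
      rw [abs_pos]
      rintro rfl
      have : R ≤ ‖γ 0‖ := ht1.2
      rw [hγ0] at this; linarith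
    have hsub : ∀ t, |t| ≤ |t1| → t ∈ Icc (-T) T := fun t h => abs_le.1 (h.trans ht1T)
    have := hB |t1| hpos ht1T γ hγ0 (hcont.mono fun t ht => hsub t (abs_le.2 ht)) (by
      intro t ht
      have ht' : |t| < |t1| := abs_lt.2 ht
      have hlt : ‖γ t‖ < R := by
        by_contra h
        have : |t1| ≤ |t| := hmin ⟨hsub t ht'.le, not_lt.1 h⟩
        linarith
      have := hder t (abs_lt.1 (ht'.trans_le ht1T))
      rwa [hpid _ hlt.le] at this) t1 (abs_le.1 le_rfl)
    have h2 : R ≤ ‖γ t1‖ := ht1.2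
    linarith
  refine ⟨γ, hγ0, hcont, fun t ht => ?_⟩
  have := hder t ht
  rwa [hpid _ (key t (Ioo_subset_Icc_self ht)).le] at this

open Set in
lemma ode_glob (F : ℝ × ℝ → ℝ × ℝ)
    (hL : ∀ R : ℝ, ∃ K : NNReal, LipschitzOnWith K F (Metric.closedBall 0 R)) (x0 : ℝ × ℝ)
    (hB : ∀ T, 0 < T → ∃ B : ℝ, ∀ ρ, 0 < ρ → ρ ≤ T → ∀ γ : ℝ → ℝ × ℝ, γ 0 = x0 →
      ContinuousOn γ (Icc (-ρ) ρ) →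
      (∀ t ∈ Ioo (-ρ) ρ, HasDerivAt γ (F (γ t)) t) → ∀ t ∈ Icc (-ρ) ρ, ‖γ t‖ ≤ B) :
    ∃ γ : ℝ → ℝ × ℝ, γ 0 = x0 ∧ ∀ t, HasDerivAt γ (F (γ t)) t := by
  have hex : ∀ n : ℕ, ∃ γ : ℝ → ℝ × ℝ, γ 0 = x0 ∧ ContinuousOn γ (Icc (-((n : ℝ) + 1)) (n + 1)) ∧
      ∀ t ∈ Ioo (-((n : ℝ) + 1)) (n + 1), HasDerivAt γ (F (γ t)) t := by
    intro n
    have hn : (0 : ℝ) < n + 1 := by positivity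
    obtain ⟨B, h⟩ := hB (n + 1) hn
    exact ode_step F hL x0 (n + 1) B hn h
  choose g hg0 hgc hgd using hex
  have huniq : ∀ n m : ℕ, n ≤ m → EqOn (g n) (g m) (Icc (-((n : ℝ) + 1)) (n + 1)) := by
    intro n m hnm
    have hnm' : (n : ℝ) ≤ m := by exact_mod_cast hnm
    have hn : (0 : ℝ) < n + 1 := by positivity
    have hsub : Icc (-((n : ℝ) + 1)) (n + 1) ⊆ Icc (-((m : ℝ) + 1)) (m + 1) :=
      Icc_subset_Icc (by linarith) (by linarith)
    have hsub' : Ioo (-((n : ℝ) + 1)) (n + 1) ⊆ Ioo (-((m : ℝ) + 1)) (m + 1) :=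
      Ioo_subset_Ioo (by linarith) (by linarith)
    obtain ⟨B, h⟩ := hB (n + 1) hn
    obtain ⟨K, hK⟩ := hL B
    have b1 := h (n + 1) hn le_rfl (g n) (hg0 n) (hgc n) (hgd n)
    have b2 := h (n + 1) hn le_rfl (g m) (hg0 m) ((hgc m).mono hsub)
      (fun t ht => hgd m t (hsub' ht))
    exact ODE_solution_unique_of_mem_Icc (v := fun _ => F) (s := fun _ => Metric.closedBall 0 B)
      (K := K) (t₀ := 0) (fun _ _ => hK) ⟨by linarith, hn⟩ (hgc n) (hgd n)
      (fun t ht => mem_closedBall_zero_iff.2 (b1 t (Ioo_subset_Icc_self ht)))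
      ((hgc m).mono hsub) (fun t ht => hgd m t (hsub' ht))
      (fun t ht => mem_closedBall_zero_iff.2 (b2 t (Ioo_subset_Icc_self ht)))
      (by rw [hg0, hg0])
  refine ⟨fun t => g ⌈|t|⌉₊ t, by simp [hg0], fun t => ?_⟩
  have hev : (fun t => g ⌈|t|⌉₊ t) =ᶠ[nhds t] g (⌈|t|⌉₊ + 1) := by
    have : ∀ᶠ s in nhds t, |s| < |t| + 1 :=
      continuous_abs.continuousAt.eventually (gt_mem_nhds (lt_add_one _))
    filter_upwards [this] with s hs
    apply huniq
    · have : |s| ≤ ((⌈|t|⌉₊ + 1 : ℕ) : ℝ) := by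
        push_cast; linarith [Nat.le_ceil |t|]
      exact Nat.ceil_le.2 this
    · have := Nat.le_ceil |s|
      exact abs_le.1 (by linarith)
  have hd := hgd (⌈|t|⌉₊ + 1) t (abs_lt.1 (by have := Nat.le_ceil |t|; push_cast; linarith))
  have := hd.congr_of_eventuallyEq hev
  have he : g ⌈|t|⌉₊ t = g (⌈|t|⌉₊ + 1) t := hev.self_of_nhds
  rw [← he] at this
  exact this


lemma g_deriv {α : ℝ} (hα : 0 < α) (x : ℝ) :
    HasDerivAt (fun x : ℝ => |x| ^ α * x) ((α + 1) * |x| ^ α) x := by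
  rcases eq_or_ne x 0 with rfl | hx
  · rw [hasDerivAt_iff_tendsto_slope]
    have hc : Continuous (fun x : ℝ => |x| ^ α) :=
      continuous_abs.rpow_const (fun _ => Or.inr hα.le)
    have h1 : Tendsto (fun x : ℝ => |x| ^ α) (nhdsWithin 0 {0}ᶜ) (nhds ((α + 1) * |0| ^ α)) := by
      have := (hc.tendsto 0).mono_left (nhdsWithin_le_nhds (s := {0}ᶜ))
      simpa [Real.zero_rpow hα.ne'] using this
    refine h1.congr' ?_
    filter_upwards [self_mem_nhdsWithin] with y hy
    have hy : y ≠ 0 := hy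
    simp [slope_def_field, hy]
  · have h := ((hasDerivAt_abs hx).rpow_const (p := α) (Or.inl (abs_ne_zero.2 hx))).mul
      (hasDerivAt_id x)
    refine h.congr_deriv ?_
    have h1 : (SignType.sign x : ℝ) * x = |x| := sign_mul_self x
    have h2 : |x| ^ (α - 1) * |x| = |x| ^ α := by
      rw [← Real.rpow_add_one (abs_ne_zero.2 hx)]; ring_nf
    simp only [id]
    calc _ = α * (|x| ^ (α - 1) * ((SignType.sign x : ℝ) * x)) + |x| ^ α := by ring
      _ = _ := by rw [h1, h2]; ring

lemma g_cont {α : ℝ} (hα : 0 < α) : Continuous (fun x : ℝ => |x| ^ α) :=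
  continuous_abs.rpow_const (fun _ => Or.inr hα.le)

lemma g_contDiff {α : ℝ} (hα : 0 < α) : ContDiff ℝ 1 (fun x : ℝ => |x| ^ α * x) := by
  rw [contDiff_one_iff_deriv]
  refine ⟨fun x => (g_deriv hα x).differentiableAt, ?_⟩
  have : deriv (fun x : ℝ => |x| ^ α * x) = fun x => (α + 1) * |x| ^ α :=
    funext fun x => (g_deriv hα x).deriv
  rw [this]
  exact (g_cont hα).const_mul _

noncomputable def En (α β x y : ℝ) : ℝ := y ^ 2 / 2 + β * (|x| ^ (α + 2) / (α + 2) - x ^ 2 / 2)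

lemma En_deriv {α β δ : ℝ} (hα : 0 < α) {w y : ℝ → ℝ} {t : ℝ} (hw : HasDerivAt w (y t) t)
    (hy : HasDerivAt y (δ * y t - β * (|w t| ^ α * w t - w t)) t) :
    HasDerivAt (fun t => En α β (w t) (y t)) (δ * y t ^ 2) t := by
  have h1 := (hasDerivAt_abs_rpow (w t) (p := α + 2) (by linarith)).comp t hw
  have h2 := ((hy.pow 2).div_const 2).add (((h1.div_const (α + 2)).sub
    ((hw.pow 2).div_const 2)).const_mul β)
  refine h2.congr_deriv ?_
  have : α + 2 ≠ 0 := by linarith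
  simp only [add_sub_cancel_right]
  field_simp
  push_cast
  ring

lemma En_pow {α x : ℝ} (hα : 0 < α) : |x| ^ (α + 2) = |x| ^ α * x ^ 2 := by
  rw [Real.rpow_add' (abs_nonneg _) (by linarith)]
  simp

lemma En_eq {α β x y : ℝ} (hα : 0 < α) :
    En α β x y = y ^ 2 / 2 + β * x ^ 2 * (|x| ^ α / (α + 2) - 1 / 2) := by
  rw [En, En_pow hα]; ring

lemma En_cont {α β : ℝ} (hα : 0 < α) : Continuous (fun z : ℝ × ℝ => En α β z.1 z.2) := by
  unfold En
  have : Continuous (fun z : ℝ × ℝ => |z.1| ^ (α + 2)) :=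
    (g_cont (α := α + 2) (by linarith)).comp continuous_fst
  fun_prop

lemma En_coer {α β : ℝ} (hα : 0 < α) (hβ : 0 < β) :
    ∃ K : ℝ, 0 ≤ K ∧ ∀ x y : ℝ, (x ^ 2 + y ^ 2) / 2 ≤ En α β x y + K := by
  set m : ℝ := (β + 1) * (α + 2) / (2 * β) with hm
  have hm0 : 0 < m := by positivity
  refine ⟨(β + 1) * (m ^ (1 / α)) ^ 2 / 2, by positivity, fun x y => ?_⟩
  rw [En_eq hα]
  rcases le_total m (|x| ^ α) with h | h
  · have h1 : β * (|x| ^ α / (α + 2)) ≥ (β + 1) / 2 := by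
      calc β * (|x| ^ α / (α + 2)) ≥ β * (m / (α + 2)) := by gcongr
        _ = _ := by rw [hm]; field_simp
    have h2 : 0 ≤ (β + 1) * (m ^ (1 / α)) ^ 2 / 2 := by positivity
    nlinarith [mul_le_mul_of_nonneg_left h1 (sq_nonneg x)]
  · have h1 : |x| ≤ m ^ (1 / α) := by
      have := Real.rpow_le_rpow (by positivity) h (by positivity : 0 ≤ 1 / α)
      rwa [← Real.rpow_mul (abs_nonneg _), mul_one_div_cancel hα.ne', Real.rpow_one] at this
    have h2 : x ^ 2 ≤ (m ^ (1 / α)) ^ 2 := by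
      rw [← sq_abs x]; gcongr
    have h3 : 0 ≤ β * x ^ 2 * (|x| ^ α / (α + 2)) := by positivity
    nlinarith [mul_le_mul_of_nonneg_left h2 (by linarith : 0 ≤ β + 1)]

open Set in
lemma gron {Q Q' : ℝ → ℝ} {δ ρ : ℝ} (hρ : 0 < ρ) (hc : ContinuousOn Q (Icc (-ρ) ρ))
    (hd : ∀ t ∈ Ioo (-ρ) ρ, HasDerivAt Q (Q' t) t)
    (h0 : ∀ t ∈ Ioo (-ρ) ρ, 0 ≤ Q' t) (h1 : ∀ t ∈ Ioo (-ρ) ρ, Q' t ≤ 2 * δ * Q t) :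
    (∀ t ∈ Icc (-ρ) 0, Q t ≤ Q 0) ∧ (∀ t ∈ Icc 0 ρ, Q t ≤ Q 0 * Real.exp (2 * δ * t)) := by
  have hm : MonotoneOn Q (Icc (-ρ) ρ) := by
    apply monotoneOn_of_deriv_nonneg (convex_Icc _ _) hc
    · intro t ht
      rw [interior_Icc] at ht
      exact (hd t ht).differentiableAt.differentiableWithinAt
    · intro t ht
      rw [interior_Icc] at ht
      rw [(hd t ht).deriv]; exact h0 t ht
  have hexp : ∀ t, HasDerivAt (fun t => Real.exp (-(2 * δ * t))) (Real.exp (-(2 * δ * t)) * (-(2 * δ))) t := by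
    intro t
    have := (((hasDerivAt_id t).const_mul (2 * δ)).neg).exp
    simpa using this
  have hder : ∀ t ∈ Ioo (-ρ) ρ, HasDerivAt (fun t => Q t * Real.exp (-(2 * δ * t))) _ t :=
    fun t ht => (hd t ht).mul (hexp t)
  have ha : AntitoneOn (fun t => Q t * Real.exp (-(2 * δ * t))) (Icc (-ρ) ρ) := by
    apply antitoneOn_of_deriv_nonpos (convex_Icc _ _)
    · exact hc.mul (by fun_prop)
    · intro t ht
      rw [interior_Icc] at ht
      exact (hder t ht).differentiableAt.differentiableWithinAt
    · intro t ht
      rw [interior_Icc] at ht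
      rw [(hder t ht).deriv]
      have := h1 t ht
      have he := Real.exp_pos (-(2 * δ * t))
      nlinarith
  constructor
  · intro t ht
    exact hm ⟨ht.1, by linarith [ht.2]⟩ ⟨by linarith, hρ.le⟩ ht.2
  · intro t ht
    have := ha (show (0 : ℝ) ∈ _ from ⟨by linarith, hρ.le⟩) (⟨by linarith [ht.1], ht.2⟩ : t ∈ Icc (-ρ) ρ) ht.1
    simp only [mul_zero, neg_zero, Real.exp_zero, mul_one] at this
    rw [Real.exp_neg] at this
    rwa [← div_eq_mul_inv, div_le_iff₀ (Real.exp_pos _)] at this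

/-- The autonomous system. -/
def Sys (α β δ : ℝ) (w y : ℝ → ℝ) : Prop :=
  ∀ t, HasDerivAt w (y t) t ∧ HasDerivAt y (δ * y t - β * (|w t| ^ α * w t - w t)) t

open Set in
lemma sys_apriori {α β δ : ℝ} (hα : 0 < α) (hδ : 0 < δ) {K x0 y0 : ℝ}
    (hK : ∀ x y : ℝ, (x ^ 2 + y ^ 2) / 2 ≤ En α β x y + K) {ρ : ℝ} (hρ : 0 < ρ) {w y : ℝ → ℝ}
    (hw0 : w 0 = x0) (hy0 : y 0 = y0)
    (hw : ContinuousOn w (Icc (-ρ) ρ)) (hy : ContinuousOn y (Icc (-ρ) ρ))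
    (hdw : ∀ t ∈ Ioo (-ρ) ρ, HasDerivAt w (y t) t)
    (hdy : ∀ t ∈ Ioo (-ρ) ρ, HasDerivAt y (δ * y t - β * (|w t| ^ α * w t - w t)) t) :
    (∀ t ∈ Icc (-ρ) 0, En α β (w t) (y t) + K ≤ En α β x0 y0 + K) ∧
    (∀ t ∈ Icc 0 ρ, En α β (w t) (y t) + K ≤ (En α β x0 y0 + K) * Real.exp (2 * δ * t)) := by
  have hc : ContinuousOn (fun t => En α β (w t) (y t) + K) (Icc (-ρ) ρ) :=
    ((En_cont hα).comp_continuousOn (hw.prodMk hy)).add continuousOn_const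
  have hg := gron (Q := fun t => En α β (w t) (y t) + K) (Q' := fun t => δ * y t ^ 2)
      (δ := δ) hρ hc
      (fun t ht => (En_deriv hα (hdw t ht) (hdy t ht)).add_const K)
      (fun t _ => by positivity)
      (fun t _ => by
        have := hK (w t) (y t)
        have := mul_le_mul_of_nonneg_left this hδ.le
        nlinarith [mul_nonneg hδ.le (sq_nonneg (w t))])
  simpa only [hw0, hy0] using hg

lemma abs_le_of_half {x y q : ℝ} (h : (x ^ 2 + y ^ 2) / 2 ≤ q) : |x| ≤ 2 * q + 1 := by
  nlinarith [sq_nonneg (|x| - 1), sq_abs x, sq_nonneg y, sq_nonneg x]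

noncomputable def Fld (α β δ : ℝ) (z : ℝ × ℝ) : ℝ × ℝ :=
  (z.2, δ * z.2 - β * (|z.1| ^ α * z.1 - z.1))

lemma Fld_lip {α : ℝ} (β δ : ℝ) (hα : 0 < α) (R : ℝ) :
    ∃ K : NNReal, LipschitzOnWith K (Fld α β δ) (Metric.closedBall 0 R) := by
  have hF : ContDiff ℝ 1 (Fld α β δ) := by
    have h1 : ContDiff ℝ 1 (fun z : ℝ × ℝ => |z.1| ^ α * z.1) := (g_contDiff hα).comp contDiff_fst
    exact contDiff_snd.prodMk ((contDiff_const.mul contDiff_snd).sub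
      (contDiff_const.mul (h1.sub contDiff_fst)))
  exact hF.contDiffOn.exists_lipschitzOnWith one_ne_zero (convex_closedBall _ _) (isCompact_closedBall _ _)

lemma Fld_comp {α β δ : ℝ} {γ : ℝ → ℝ × ℝ} {t : ℝ} (h : HasDerivAt γ (Fld α β δ (γ t)) t) :
      HasDerivAt (fun t => (γ t).1) ((γ t).2) t ∧
      HasDerivAt (fun t => (γ t).2) (δ * (γ t).2 - β * (|(γ t).1| ^ α * (γ t).1 - (γ t).1)) t :=
  ⟨h.fst, h.snd⟩

lemma sys_exists {α β δ : ℝ} (hα : 0 < α) (hβ : 0 < β) (hδ : 0 < δ) (x0 y0 : ℝ) :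
    ∃ w y : ℝ → ℝ, w 0 = x0 ∧ y 0 = y0 ∧ Sys α β δ w y := by
  obtain ⟨K, hK0, hK⟩ := En_coer hα hβ
  obtain ⟨γ, hγ0, hγ⟩ := ode_glob (Fld α β δ) (Fld_lip β δ hα) (x0, y0) (by
    intro T hT
    refine ⟨2 * ((En α β x0 y0 + K) * Real.exp (2 * δ * T)) + 1, ?_⟩
    intro ρ hρ hρT γ h0 hc hd t ht
    have hQ0 : 0 ≤ En α β x0 y0 + K := le_trans (by positivity) (hK x0 y0)
    have hg := sys_apriori hα hδ hK hρ (w := fun t => (γ t).1) (y := fun t => (γ t).2)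
      (x0 := x0) (y0 := y0) (by simp [h0]) (by simp [h0]) hc.fst hc.snd
      (fun t ht => (Fld_comp (hd t ht)).1) (fun t ht => (Fld_comp (hd t ht)).2)
    have hQ : En α β (γ t).1 (γ t).2 + K ≤ (En α β x0 y0 + K) * Real.exp (2 * δ * T) := by
      rcases le_total t 0 with h | h
      · refine (hg.1 t ⟨ht.1, h⟩).trans ?_
        exact le_mul_of_one_le_right hQ0 (Real.one_le_exp (by positivity))
      · refine (hg.2 t ⟨h, ht.2⟩).trans ?_
        have : t ≤ T := ht.2.trans hρT
        gcongr
    have hk := hK (γ t).1 (γ t).2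
    rw [Prod.norm_def]
    apply max_le
    · exact abs_le_of_half (hk.trans hQ)
    · rw [add_comm (_ ^ 2)] at hk
      exact abs_le_of_half (hk.trans hQ))
  exact ⟨fun t => (γ t).1, fun t => (γ t).2, by simp [hγ0], by simp [hγ0], fun t => Fld_comp (hγ t)⟩


lemma grow {f f' : ℝ → ℝ} {T c : ℝ} (hd : ∀ t, T ≤ t → HasDerivAt f (f' t) t)
    (hc : ∀ t, T ≤ t → c ≤ f' t) (t : ℝ) (ht : T ≤ t) : f T + c * (t - T) ≤ f t := by
  have := (convex_Ici T).mul_sub_le_image_sub_of_le_deriv (f := f) (C := c)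
    (fun t ht => (hd t ht).continuousAt.continuousWithinAt)
    (fun t ht => (hd t (interior_subset ht)).differentiableAt.differentiableWithinAt)
    (fun t ht => by rw [(hd t (interior_subset ht)).deriv]; exact hc t (interior_subset ht))
    T Set.self_mem_Ici t ht ht
  linarith

lemma grow_top {f f' : ℝ → ℝ} {c : ℝ} (hc0 : 0 < c) (hd : ∀ᶠ t in atTop, HasDerivAt f (f' t) t)
    (hc : ∀ᶠ t in atTop, c ≤ f' t) : Tendsto f atTop atTop := by
  obtain ⟨T, hT⟩ := eventually_atTop.1 (hd.and hc)
  refine tendsto_atTop_mono' atTop (f₁ := fun t => (f T - c * T) + c * t) ?_ ?_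
  · filter_upwards [eventually_ge_atTop T] with t ht
    have := grow (fun t ht => (hT t ht).1) (fun t ht => (hT t ht).2) t ht
    linarith
  · exact tendsto_atTop_add_const_left _ _ (tendsto_id.const_mul_atTop hc0)

lemma unb_pos {w y : ℝ → ℝ} {L c : ℝ} (hc : 0 < c) (hw : ∀ t, HasDerivAt w (y t) t)
    (hL : Tendsto w atTop (nhds L)) (h : ∀ᶠ t in atTop, c ≤ y t) : False :=
  not_tendsto_nhds_of_tendsto_atTop (grow_top hc (Eventually.of_forall hw) h) L hL

lemma unb_neg {w y : ℝ → ℝ} {L c : ℝ} (hc : 0 < c) (hw : ∀ t, HasDerivAt w (y t) t)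
    (hL : Tendsto w atTop (nhds L)) (h : ∀ᶠ t in atTop, y t ≤ -c) : False := by
  refine unb_pos (w := fun t => - w t) (y := fun t => - y t) hc (fun t => (hw t).neg) hL.neg ?_
  filter_upwards [h] with t ht
  linarith

lemma h_cont {α : ℝ} (hα : 0 < α) : Continuous (fun x : ℝ => |x| ^ α * x - x) :=
  ((g_cont hα).mul continuous_id).sub continuous_id

lemma En_cont0 {α β : ℝ} (hα : 0 < α) : Continuous (fun x : ℝ => En α β x 0) := by
  unfold En
  have := g_cont (α := α + 2) (by linarith)
  fun_prop

lemma lim_contra {α β δ : ℝ} (hα : 0 < α) (hβ : 0 < β) {w y : ℝ → ℝ}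
    (hs : Sys α β δ w y) {L E1 : ℝ} (hE1 : 0 < E1) (hL : Tendsto w atTop (nhds L))
    (hE : ∀ᶠ t in atTop, E1 ≤ En α β (w t) (y t))
    (hsgn : (∀ᶠ t in atTop, 0 ≤ y t) ∨ (∀ᶠ t in atTop, y t ≤ 0)) : False := by
  have hw : ∀ t, HasDerivAt w (y t) t := fun t => (hs t).1
  have hq : ∀ t, HasDerivAt (fun t => y t - δ * w t) (-β * (|w t| ^ α * w t - w t)) t := by
    intro t
    refine ((hs t).2.sub ((hs t).1.const_mul δ)).congr_deriv ?_
    ring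
  have hh : Tendsto (fun t => |w t| ^ α * w t - w t) atTop (nhds (|L| ^ α * L - L)) :=
    ((h_cont hα).tendsto L).comp hL
  have hq' := hh.const_mul (-β)
  rcases lt_trichotomy (|L| ^ α * L - L) 0 with h | h | h
  · have hpos : 0 < -β * (|L| ^ α * L - L) := mul_pos_of_neg_of_neg (by linarith) h
    have h1 := grow_top (half_pos hpos) (Eventually.of_forall hq)
      ((hq'.eventually (lt_mem_nhds (half_lt_self hpos))).mono fun t ht => ht.le)
    have h2 := h1.atTop_add (hL.const_mul δ)
    refine unb_pos one_pos hw hL ?_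
    filter_upwards [h2.eventually_ge_atTop 1] with t ht
    linarith
  · have hV : En α β L 0 ≤ 0 := by
      rw [En_eq hα]
      have h0 : L * (|L| ^ α - 1) = 0 := by linarith
      rcases mul_eq_zero.1 h0 with h0 | h0
      · simp [h0]
      · have : |L| ^ α = 1 := by linarith
        rw [this]
        have h3 : 1 / (α + 2) - 1 / 2 ≤ 0 := by
          rw [sub_nonpos]
          exact one_div_le_one_div_of_le (by norm_num) (by linarith)
        have := mul_nonpos_of_nonneg_of_nonpos (by positivity : 0 ≤ β * L ^ 2) h3
        linarith
    have hVt : Tendsto (fun t => En α β (w t) 0) atTop (nhds (En α β L 0)) :=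
      ((En_cont0 hα).tendsto L).comp hL
    have hys : ∀ᶠ t in atTop, E1 ≤ y t ^ 2 := by
      filter_upwards [hE, hVt.eventually (gt_mem_nhds (by linarith : En α β L 0 < E1 / 2))] with t h1 h2
      unfold En at h1 h2
      linarith
    have hya : ∀ᶠ t in atTop, Real.sqrt E1 ≤ |y t| := by
      filter_upwards [hys] with t ht
      exact Real.sqrt_le_iff.2 ⟨abs_nonneg _, by rwa [sq_abs]⟩
    have hsq := Real.sqrt_pos.2 hE1
    rcases hsgn with h1 | h1
    · refine unb_pos hsq hw hL ?_
      filter_upwards [hya, h1] with t h2 h3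
      rwa [abs_of_nonneg h3] at h2
    · refine unb_neg hsq hw hL ?_
      filter_upwards [hya, h1] with t h2 h3
      rw [abs_of_nonpos h3] at h2; linarith
  · have hpos : 0 < β * (|L| ^ α * L - L) := mul_pos hβ h
    have hq'' := hh.const_mul β
    have h1 := grow_top (f := fun t => - (y t - δ * w t)) (half_pos hpos)
      (Eventually.of_forall fun t => ((hq t).neg).congr_deriv (by ring : _ = β * (|w t| ^ α * w t - w t)))
      ((hq''.eventually (lt_mem_nhds (half_lt_self hpos))).mono fun t ht => ht.le)
    have h2 := h1.atTop_add (hL.const_mul (-δ))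
    refine unb_neg one_pos hw hL ?_
    filter_upwards [h2.eventually_ge_atTop 1] with t ht
    linarith

lemma top_contra {α β δ : ℝ} (hα : 0 < α) (hβ : 0 < β) {w y : ℝ → ℝ}
    (hs : Sys α β δ w y) (hL : Tendsto w atTop atTop)
    (hsgn : ∀ᶠ t in atTop, 0 ≤ y t) : False := by
  have hp : Tendsto (fun t => w t ^ α) atTop atTop := (tendsto_rpow_atTop hα).comp hL
  have h1 := grow_top (f := fun t => -(y t / w t)) (f' := fun t => -(((δ * y t - β * (|w t| ^ α * w t - w t)) * w t - y t * y t) / w t ^ 2))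
    one_pos (by
      filter_upwards [hL.eventually_gt_atTop 0] with t ht
      exact ((hs t).2.div (hs t).1 ht.ne').neg) (by
      filter_upwards [hL.eventually_gt_atTop 0, hp.eventually_ge_atTop ((1 + δ ^ 2 / 4) / β + 1)] with t ht hpt
      have : -(((δ * y t - β * (|w t| ^ α * w t - w t)) * w t - y t * y t) / w t ^ 2)
        = (y t / w t - δ / 2) ^ 2 - δ ^ 2 / 4 + β * (w t ^ α - 1) := by
        rw [abs_of_pos ht]; field_simp; ring
      rw [this]
      have h2 : β * (w t ^ α - 1) ≥ 1 + δ ^ 2 / 4 := by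
        have : w t ^ α - 1 ≥ (1 + δ ^ 2 / 4) / β := by linarith
        rw [ge_iff_le, div_le_iff₀ hβ] at this
        linarith
      nlinarith [sq_nonneg (y t / w t - δ / 2)])
  obtain ⟨t, h2, h3, h4⟩ := ((h1.eventually_ge_atTop 1).and (hsgn.and (hL.eventually_gt_atTop 0))).exists
  have : 0 ≤ y t / w t := by positivity
  linarith

lemma no_pos {α β δ : ℝ} (hα : 0 < α) (hβ : 0 < β) {w y : ℝ → ℝ}
    (hs : Sys α β δ w y) {S E1 : ℝ} (hE1 : 0 < E1)
    (hE : ∀ t, S ≤ t → E1 ≤ En α β (w t) (y t)) : ∃ t, S ≤ t ∧ w t ≤ 0 := by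
  by_contra hcon
  push Not at hcon
  have hE' : ∀ᶠ t in atTop, E1 ≤ En α β (w t) (y t) := eventually_atTop.2 ⟨S, hE⟩
  have hyc : Continuous y := continuous_iff_continuousAt.2 fun t => (hs t).2.continuousAt
  have hwc : Continuous w := continuous_iff_continuousAt.2 fun t => (hs t).1.continuousAt
  by_cases hA : ∃ T, S ≤ T ∧ y T ≤ 0
  · obtain ⟨T, hST, hyT⟩ := hA
    have hneg : ∀ t, T ≤ t → y t ≤ 0 := by
      intro t ht
      refine image_le_of_deriv_right_lt_deriv_boundary (a := T) (b := t) hyc.continuousOn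
        (fun s _ => (hs s).2.hasDerivWithinAt) (B := fun _ => 0) (B' := fun _ => 0) hyT
        (fun s => hasDerivAt_const s 0) ?_ ⟨ht, le_rfl⟩
      intro s hs1 hys
      have hws := hcon s (hST.trans hs1.1)
      have hes := hE s (hST.trans hs1.1)
      have hys : y s = 0 := hys
      rw [En_eq hα, hys] at hes
      rw [hys]
      have h1 : 0 < |w s| ^ α / (α + 2) - 1 / 2 := by
        by_contra h
        have := mul_nonpos_of_nonneg_of_nonpos (by positivity : 0 ≤ β * w s ^ 2) (not_lt.1 h)
        linarith
      have h2 : 1 < |w s| ^ α := by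
        have h3 : 1 / 2 < |w s| ^ α / (α + 2) := by linarith
        rw [lt_div_iff₀ (by linarith)] at h3
        linarith
      have : 0 < β * (w s * (|w s| ^ α - 1)) := by
        have : 0 < |w s| ^ α - 1 := by linarith
        positivity
      linarith
    have hanti : AntitoneOn w (Set.Ici T) := by
      apply antitoneOn_of_deriv_nonpos (convex_Ici T) hwc.continuousOn
      · exact fun t _ => (hs t).1.differentiableAt.differentiableWithinAt
      · intro t ht
        rw [(hs t).1.deriv]; exact hneg t (interior_subset ht)
    have hanti' : Antitone (fun t => w (max T t)) := fun a b hab =>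
      hanti (Set.mem_Ici.2 (le_max_left _ _)) (Set.mem_Ici.2 (le_max_left _ _)) (max_le_max le_rfl hab)
    have hbdd : BddBelow (Set.range (fun t => w (max T t))) :=
      ⟨0, by rintro _ ⟨t, rfl⟩; exact (hcon _ (hST.trans (le_max_left _ _))).le⟩
    have hlim := tendsto_atTop_ciInf hanti' hbdd
    have hlim' : Tendsto w atTop (nhds (⨅ t, w (max T t))) := by
      refine hlim.congr' ?_
      filter_upwards [eventually_ge_atTop T] with t ht
      rw [max_eq_right ht]
    exact lim_contra hα hβ hs hE1 hlim' hE' (Or.inr (eventually_atTop.2 ⟨T, hneg⟩))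
  · push Not at hA
    have hmono : MonotoneOn w (Set.Ici S) := by
      apply monotoneOn_of_deriv_nonneg (convex_Ici S) hwc.continuousOn
      · exact fun t _ => (hs t).1.differentiableAt.differentiableWithinAt
      · intro t ht
        rw [(hs t).1.deriv]; exact (hA t (interior_subset ht)).le
    have hmono' : Monotone (fun t => w (max S t)) := fun a b hab =>
      hmono (Set.mem_Ici.2 (le_max_left _ _)) (Set.mem_Ici.2 (le_max_left _ _)) (max_le_max le_rfl hab)
    have hpos : ∀ᶠ t in atTop, 0 ≤ y t := eventually_atTop.2 ⟨S, fun t ht => (hA t ht).le⟩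
    have heq : (fun t => w (max S t)) =ᶠ[atTop] w := by
      filter_upwards [eventually_ge_atTop S] with t ht
      rw [max_eq_right ht]
    rcases tendsto_atTop_of_monotone hmono' with h | ⟨l, h⟩
    · exact top_contra hα hβ hs (h.congr' heq) hpos
    · exact lim_contra hα hβ hs hE1 (h.congr' heq) hE' (Or.inl hpos)

lemma Sys.neg {α β δ : ℝ} {w y : ℝ → ℝ} (hs : Sys α β δ w y) :
    Sys α β δ (fun t => - w t) (fun t => - y t) := by
  intro t
  refine ⟨(hs t).1.neg, (hs t).2.neg.congr_deriv ?_⟩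
  rw [abs_neg]; ring

lemma osc {α β δ : ℝ} (hα : 0 < α) (hβ : 0 < β) {w y : ℝ → ℝ}
    (hs : Sys α β δ w y) {S E1 : ℝ} (hE1 : 0 < E1)
    (hE : ∀ t, S ≤ t → E1 ≤ En α β (w t) (y t)) : ∃ t, S ≤ t ∧ w t = 0 := by
  obtain ⟨t1, h1, h1'⟩ := no_pos hα hβ hs hE1 hE
  obtain ⟨t2, h2, h2'⟩ := no_pos hα hβ hs.neg hE1 (fun t ht => by
    have := hE t ht
    simpa [En] using this)
  have hwc : Continuous w := continuous_iff_continuousAt.2 fun t => (hs t).1.continuousAt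
  obtain ⟨t, ht, h⟩ := (isPreconnected_Ici (a := S)).intermediate_value h1 h2 hwc.continuousOn
    (⟨h1', by linarith⟩ : (0 : ℝ) ∈ Set.Icc _ _)
  exact ⟨t, ht, h⟩

lemma strict_of {E : ℝ → ℝ} (hm : Monotone E) {d s t0 t : ℝ} (hd : HasDerivAt E d t0) (hd0 : d ≠ 0)
    (hst : s < t) (h1 : s ≤ t0) (h2 : t0 ≤ t) : E s < E t := by
  refine lt_of_le_of_ne (hm hst.le) fun heq => hd0 ?_
  have hc : ∀ x ∈ Set.Icc s t, E x = E s := fun x hx =>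
    le_antisymm ((hm hx.2).trans heq.ge) (hm hx.1)
  have h3 : HasDerivWithinAt E 0 (Set.Icc s t) t0 :=
    (hasDerivWithinAt_const t0 (Set.Icc s t) (E s)).congr hc (hc t0 ⟨h1, h2⟩)
  exact ((uniqueDiffOn_Icc hst) t0 ⟨h1, h2⟩).eq_deriv _ hd.hasDerivWithinAt h3

lemma barbalat {f f' f'' : ℝ → ℝ} {l M T : ℝ} (hM : 0 < M)
    (h1 : ∀ t, T ≤ t → HasDerivAt f (f' t) t) (h2 : ∀ t, T ≤ t → HasDerivAt f' (f'' t) t)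
    (hb : ∀ t, T ≤ t → |f'' t| ≤ M) (hl : Tendsto f atTop (nhds l)) :
    Tendsto f' atTop (nhds 0) := by
  rw [Metric.tendsto_nhds]
  intro ε hε
  set h : ℝ := ε / (2 * M) with hh
  have hh0 : 0 < h := by positivity
  have hlim : Tendsto (fun t => f (t + h) - f t) atTop (nhds (l - l)) :=
    (hl.comp (tendsto_atTop_add_const_right _ h tendsto_id)).sub hl
  rw [sub_self, Metric.tendsto_nhds] at hlim
  filter_upwards [hlim (h * (ε / 2)) (by positivity), eventually_ge_atTop T] with t ht htT
  rw [dist_zero_right, Real.norm_eq_abs] at *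
  obtain ⟨ξ, hξ, he⟩ := exists_hasDerivAt_eq_slope f f' (lt_add_of_pos_right t hh0)
    (fun s hs => (h1 s (htT.trans hs.1)).continuousAt.continuousWithinAt)
    (fun s hs => h1 s (htT.trans hs.1.le))
  have hf : f (t + h) - f t = h * f' ξ := by
    rw [he, add_sub_cancel_left, mul_div_cancel₀ _ hh0.ne']
  rw [hf, abs_mul, abs_of_pos hh0] at ht
  have ht' : |f' ξ| < ε / 2 := lt_of_mul_lt_mul_left ht hh0.le
  have hlip := (convex_Ici T).norm_image_sub_le_of_norm_hasDerivWithin_le (f := f') (f' := f'') (C := M)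
    (fun s hs => (h2 s hs).hasDerivWithinAt) (fun s hs => hb s hs) (show t ∈ Set.Ici T from htT)
    (show ξ ∈ Set.Ici T from htT.trans hξ.1.le)
  rw [Real.norm_eq_abs, Real.norm_eq_abs, abs_of_pos (sub_pos.2 hξ.1)] at hlip
  have h3 : M * (ξ - t) ≤ ε / 2 := by
    have : ξ - t ≤ h := by linarith [hξ.2]
    calc M * (ξ - t) ≤ M * h := by gcongr
      _ = ε / 2 := by rw [hh]; field_simp
  have h4 : |f' t| ≤ |f' ξ| + |f' ξ - f' t| := by
    have := abs_sub (f' ξ) (f' ξ - f' t)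
    simpa using this
  linarith


lemma Sys.mono {α β δ : ℝ} (hα : 0 < α) (hδ : 0 < δ) {w y : ℝ → ℝ} (hs : Sys α β δ w y) :
    Monotone (fun t => En α β (w t) (y t)) := by
  apply monotone_of_deriv_nonneg
  · exact fun t => (En_deriv hα (hs t).1 (hs t).2).differentiableAt
  · intro t
    rw [(En_deriv hα (hs t).1 (hs t).2).deriv]
    positivity

lemma bdd_comp {B : ℝ} {z v : ℝ → ℝ} (hz : ∀ t, 0 ≤ t → |z t| ≤ B) (hv : ∀ t, 0 ≤ t → |v t| ≤ B)
    {G : ℝ × ℝ → ℝ} (hG : Continuous G) : ∃ M : ℝ, 0 < M ∧ ∀ t, 0 ≤ t → |G (z t, v t)| ≤ M := by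
  obtain ⟨M, hM⟩ := (isCompact_closedBall (0 : ℝ × ℝ) B).exists_bound_of_continuousOn hG.continuousOn
  refine ⟨|M| + 1, by positivity, fun t ht => ?_⟩
  have := hM (z t, v t) (by
    rw [mem_closedBall_zero_iff, Prod.norm_def]
    exact max_le (hz t ht) (hv t ht))
  rw [Real.norm_eq_abs] at this
  linarith [le_abs_self M]

lemma back {α β δ : ℝ} (hα : 0 < α) (hβ : 0 < β) (hδ : 0 < δ) {w y : ℝ → ℝ}
    (hs : Sys α β δ w y) {K B : ℝ}
    (hK : ∀ x y : ℝ, (x ^ 2 + y ^ 2) / 2 ≤ En α β x y + K)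
    (hBw : ∀ t, t ≤ 0 → |w t| ≤ B) (hBy : ∀ t, t ≤ 0 → |y t| ≤ B)
    (hpos : 0 < w 0) (h0 : En α β (w 0) (y 0) = 0) (hy0 : y 0 ≠ 0) :
    Tendsto w atBot (nhds 1) := by
  have hwc : Continuous w := continuous_iff_continuousAt.2 fun t => (hs t).1.continuousAt
  have hm := hs.mono hα hδ
  have hneg : ∀ t, t < 0 → En α β (w t) (y t) < 0 := by
    intro t ht
    have := strict_of hm (En_deriv hα (hs 0).1 (hs 0).2) (by positivity) ht ht.le le_rfl
    simp only [h0] at this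
    exact this
  have hwpos : ∀ t, t ≤ 0 → 0 < w t := by
    intro t ht
    by_contra hcon
    obtain ⟨s, hs1, hs2⟩ := intermediate_value_Icc ht hwc.continuousOn
      (⟨not_lt.1 hcon, hpos.le⟩ : (0 : ℝ) ∈ Set.Icc _ _)
    have hs0 : s ≠ 0 := by rintro rfl; linarith
    have := hneg s (lt_of_le_of_ne hs1.2 hs0)
    rw [En_eq hα, hs2] at this
    nlinarith [sq_nonneg (y s)]
  set e : ℝ := -En α β (w (-1)) (y (-1)) with he
  have he0 : 0 < e := by have := hneg (-1) (by norm_num); linarith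
  set m : ℝ := Real.sqrt (2 * e / β) with hmdef
  have hm0 : 0 < m := Real.sqrt_pos.2 (by positivity)
  have hwm : ∀ t, t ≤ -1 → m ≤ w t := by
    intro t ht
    have h1 : En α β (w t) (y t) ≤ -e := by
      have := hm ht
      simp only at this
      linarith
    rw [En_eq hα] at h1
    have hwt := hwpos t (by linarith)
    have h2 : 0 ≤ β * w t ^ 2 * (|w t| ^ α / (α + 2)) := by positivity
    refine Real.sqrt_le_iff.2 ⟨hwt.le, ?_⟩
    rw [div_le_iff₀ hβ]
    nlinarith [sq_nonneg (y t)]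
  -- time reversal
  have hz : ∀ t, HasDerivAt (fun t => w (-t)) (-y (-t)) t := by
    intro t
    have := (hs (-t)).1.scomp t (hasDerivAt_neg t)
    simpa [Function.comp_def] using this
  have hv : ∀ t, HasDerivAt (fun t => y (-t)) (-(δ * y (-t) - β * (|w (-t)| ^ α * w (-t) - w (-t)))) t := by
    intro t
    have := (hs (-t)).2.scomp t (hasDerivAt_neg t)
    simpa [Function.comp_def] using this
  have hE : ∀ t, HasDerivAt (fun t => En α β (w (-t)) (y (-t))) (-(δ * y (-t) ^ 2)) t := by
    intro t
    have := (En_deriv hα (hs (-t)).1 (hs (-t)).2).scomp t (hasDerivAt_neg t)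
    simpa [Function.comp_def] using this
  have hbz : ∀ t, 0 ≤ t → |w (-t)| ≤ B := fun t ht => hBw _ (by linarith)
  have hbv : ∀ t, 0 ≤ t → |y (-t)| ≤ B := fun t ht => hBy _ (by linarith)
  have hgc := g_cont hα
  have hgc' : Continuous (fun z : ℝ × ℝ => |z.1| ^ α) := hgc.comp continuous_fst
  have hElim : Tendsto (fun t => En α β (w (-t)) (y (-t))) atTop
      (nhds (⨅ t, En α β (w (-t)) (y (-t)))) := by
    apply tendsto_atTop_ciInf
    · intro a b hab
      exact hm (neg_le_neg hab)
    · refine ⟨-K, ?_⟩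
      rintro _ ⟨t, rfl⟩
      have := hK (w (-t)) (y (-t))
      have h2 : 0 ≤ (w (-t) ^ 2 + y (-t) ^ 2) / 2 := by positivity
      simp only
      linarith
  have hv0 : Tendsto (fun t => y (-t)) atTop (nhds 0) := by
    obtain ⟨M, hM0, hM⟩ := bdd_comp hbz hbv
      (G := fun p => -(δ * (2 * p.2 * (-(δ * p.2 - β * (|p.1| ^ α * p.1 - p.1)))))) (by fun_prop)
    have h1 := barbalat (T := 0) hM0 (fun t _ => hE t) (fun t _ => by
      refine ((((hv t).pow 2).const_mul δ).neg).congr_deriv ?_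
      simp) hM hElim
    have h2 : Tendsto (fun t => y (-t) ^ 2) atTop (nhds 0) := by
      have := h1.const_mul (-(1 / δ))
      rw [mul_zero] at this
      refine this.congr fun t => ?_
      field_simp
    have h3 := h2.sqrt
    simp only [Real.sqrt_sq_eq_abs, Real.sqrt_zero] at h3
    exact (tendsto_zero_iff_abs_tendsto_zero _).2 h3
  have hv1 : Tendsto (fun t => -(δ * y (-t) - β * (|w (-t)| ^ α * w (-t) - w (-t)))) atTop (nhds 0) := by
    obtain ⟨M, hM0, hM⟩ := bdd_comp hbz hbv
      (G := fun p => -(δ * (-(δ * p.2 - β * (|p.1| ^ α * p.1 - p.1)))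
        - β * ((α + 1) * |p.1| ^ α * (-p.2) - (-p.2)))) (by fun_prop)
    have hgz : ∀ t, HasDerivAt (fun t => |w (-t)| ^ α * w (-t)) ((α + 1) * |w (-t)| ^ α * (-y (-t))) t :=
      fun t => HasDerivAt.comp (h := fun t => w (-t)) (h₂ := fun x => |x| ^ α * x) t (g_deriv hα (w (-t))) (hz t)
    exact barbalat (T := 0) hM0 (fun t _ => hv t) (fun t _ =>
      (((hv t).const_mul δ).sub (((hgz t).sub (hz t)).const_mul β)).neg) hM hv0
  have hh : Tendsto (fun t => |w (-t)| ^ α * w (-t) - w (-t)) atTop (nhds 0) := by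
    have := (hv1.add (hv0.const_mul δ)).const_mul (1 / β)
    simp only [mul_zero, add_zero] at this
    refine this.congr fun t => ?_
    field_simp
    ring
  have hp : Tendsto (fun t => w (-t) ^ α - 1) atTop (nhds 0) := by
    have h1 := hh.abs.div_const m
    rw [abs_zero, zero_div] at h1
    refine squeeze_zero_norm' ?_ h1
    filter_upwards [eventually_ge_atTop 1] with t ht
    have h2 := hwm (-t) (by linarith)
    have h3 : 0 < w (-t) := hm0.trans_le h2
    rw [Real.norm_eq_abs, le_div_iff₀ hm0, abs_of_pos h3,
      show w (-t) ^ α * w (-t) - w (-t) = (w (-t) ^ α - 1) * w (-t) by ring, abs_mul, abs_of_pos h3]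
    gcongr
  have hp1 : Tendsto (fun t => w (-t) ^ α) atTop (nhds 1) := by
    have := hp.add_const 1
    simpa using this
  have hp2 := hp1.rpow_const (p := 1 / α) (Or.inl one_ne_zero)
  rw [Real.one_rpow] at hp2
  have hp3 : Tendsto (fun t => w (-t)) atTop (nhds 1) := by
    refine hp2.congr' ?_
    filter_upwards [eventually_ge_atTop 0] with t ht
    have h3 := hwpos (-t) (by linarith)
    rw [← Real.rpow_mul h3.le, mul_one_div_cancel hα.ne', Real.rpow_one]
  have := hp3.comp tendsto_neg_atBot_atTop
  simpa [Function.comp_def] using this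

lemma core {α β δ : ℝ} (hα : 0 < α) (hβ : 0 < β) (hδ : 0 < δ) {a y0 : ℝ} (ha : 0 < a)
    (hy0 : y0 ≠ 0) (hE : En α β a y0 = 0) :
    ∃ w y : ℝ → ℝ, w 0 = a ∧ y 0 = y0 ∧ Sys α β δ w y ∧ (∃ t, w t < 0) ∧
      Tendsto w atBot (nhds 1) ∧ (∃ C, 0 ≤ C ∧ ∀ t, |w t| ≤ C * (1 + Real.exp (δ * t))) ∧
      ∀ R, ∃ t, R < t ∧ w t = 0 := by
  obtain ⟨w, y, hw0, hyy, hs⟩ := sys_exists hα hβ hδ a y0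
  obtain ⟨K, hK0, hK⟩ := En_coer hα hβ
  have hwc : Continuous w := continuous_iff_continuousAt.2 fun t => (hs t).1.continuousAt
  have hyc : Continuous y := continuous_iff_continuousAt.2 fun t => (hs t).2.continuousAt
  have hap := fun t : ℝ => sys_apriori hα hδ hK (by positivity : 0 < |t| + 1) hw0 hyy hwc.continuousOn
    hyc.continuousOn (fun t _ => (hs t).1) (fun t _ => (hs t).2)
  rw [hE, zero_add] at hap
  have hbk : ∀ t, t ≤ 0 → (w t ^ 2 + y t ^ 2) / 2 ≤ K := fun t ht =>
    (hK _ _).trans ((hap t).1 t ⟨by linarith [neg_abs_le t], ht⟩)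
  have hfw : ∀ t, 0 ≤ t → (w t ^ 2 + y t ^ 2) / 2 ≤ K * Real.exp (2 * δ * t) := fun t ht =>
    (hK _ _).trans ((hap t).2 t ⟨ht, by linarith [le_abs_self t]⟩)
  have hE0 : En α β (w 0) (y 0) = 0 := by rw [hw0, hyy, hE]
  have hy0' : y 0 ≠ 0 := by rw [hyy]; exact hy0
  have hm := hs.mono hα hδ
  have hpos : ∀ t, 0 < t → 0 < En α β (w t) (y t) := by
    intro t ht
    have := strict_of hm (En_deriv hα (hs 0).1 (hs 0).2) (by positivity) ht le_rfl ht.le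
    simp only [hE0] at this
    exact this
  have hosc : ∀ R, ∃ t, R < t ∧ w t = 0 := by
    intro R
    have hR : 0 < max R 0 + 1 := by positivity
    obtain ⟨t, ht, h⟩ := osc hα hβ hs (hpos _ hR) (S := max R 0 + 1) (fun t ht => hm ht)
    exact ⟨t, by linarith [le_max_left R 0], h⟩
  refine ⟨w, y, hw0, hyy, hs, ?_, ?_, ?_, hosc⟩
  · by_contra hcon
    push Not at hcon
    obtain ⟨t, ht, h⟩ := hosc 0
    have hmin : IsLocalMin w t := Eventually.of_forall fun s => by rw [h]; exact hcon s
    have h1 := hmin.hasDerivAt_eq_zero (hs t).1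
    have h2 := hpos t ht
    rw [En_eq hα, h, h1] at h2
    simp at h2
  · exact back hα hβ hδ hs hK (fun t ht => abs_le_of_half (hbk t ht))
      (fun t ht => abs_le_of_half (x := y t) (y := w t) (by rw [add_comm]; exact hbk t ht))
      (by rw [hw0]; exact ha) hE0 hy0'
  · refine ⟨Real.sqrt (2 * K), Real.sqrt_nonneg _, fun t => ?_⟩
    have hex := Real.exp_pos (δ * t)
    have hsq : Real.sqrt (2 * K) ^ 2 = 2 * K := Real.sq_sqrt (by positivity)
    have hs0 := Real.sqrt_nonneg (2 * K)
    rcases le_total t 0 with ht | ht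
    · have : |w t| ≤ Real.sqrt (2 * K) := Real.abs_le_sqrt (by nlinarith [hbk t ht, sq_nonneg (y t)])
      nlinarith
    · have : |w t| ≤ Real.sqrt (2 * K) * Real.exp (δ * t) := by
        apply abs_le_of_sq_le_sq _ (by positivity)
        rw [mul_pow, hsq, ← Real.exp_nat_mul]
        have h1 := hfw t ht
        have h2 : ((2 : ℕ) : ℝ) * (δ * t) = 2 * δ * t := by push_cast; ring
        rw [h2]
        nlinarith [sq_nonneg (y t)]
      nlinarith


lemma tr_fwd {f : ℝ → ℝ} {f' κ p ℓ r : ℝ} (hr : 0 < r) (hf : HasDerivAt f f' (Real.log r - ℓ)) :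
    HasDerivAt (fun r : ℝ => κ * r ^ p * f (Real.log r - ℓ))
      (κ * r ^ (p - 1) * (f' + p * f (Real.log r - ℓ))) r := by
  have h1 : HasDerivAt (fun r => f (Real.log r - ℓ)) (f' * r⁻¹) r :=
    hf.comp r ((Real.hasDerivAt_log hr.ne').sub_const ℓ)
  have h2 := ((Real.hasDerivAt_rpow_const (p := p) (Or.inl hr.ne')).const_mul κ).mul h1
  refine h2.congr_deriv ?_
  have : r ^ p = r ^ (p - 1) * r := by rw [← Real.rpow_add_one hr.ne']; ring_nf
  rw [this]
  field_simp
  ring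

lemma tr_bwd {f : ℝ → ℝ} {f' k p s : ℝ} (hf : HasDerivAt f f' (Real.exp s)) :
    HasDerivAt (fun s : ℝ => k * Real.exp (p * s) * f (Real.exp s))
      (k * Real.exp (p * s) * (p * f (Real.exp s) + Real.exp s * f')) s := by
  have h1 : HasDerivAt (fun s => f (Real.exp s)) (f' * Real.exp s) s :=
    hf.comp s (Real.hasDerivAt_exp s)
  have h3 : HasDerivAt (fun s => Real.exp (p * s)) (Real.exp (p * s) * p) s := by
    simpa using ((hasDerivAt_id s).const_mul p).exp
  refine ((h3.const_mul k).mul h1).congr_deriv ?_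
  ring

lemma En_init {n α β a b : ℝ} (hα : 0 < α) (ha : 0 < a) (hβ : β = 2 / α * (n - 2 - 2 / α))
    (h : 1 / 2 * (b - 2 * a / α) ^ 2 =
        a ^ 2 * (((n - 2) * α - 2) / (α ^ 2 * (α + 2))) * (α + 2 - 2 * a ^ α)) :
    En α β a (2 / α * a - b) = 0 := by
  have h2 : α + 2 ≠ 0 := by linarith
  rw [En_eq hα, abs_of_pos ha, hβ]
  have h1 : (2 / α * a - b) ^ 2 / 2 = 1 / 2 * (b - 2 * a / α) ^ 2 := by ring
  rw [h1, h]
  field_simp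
  ring

lemma pow_kappa {α β : ℝ} (hα : 0 < α) (hβ : 0 < β) : (β ^ (1 / α)) ^ α = β := by
  rw [← Real.rpow_mul hβ.le, one_div_mul_cancel hα.ne', Real.rpow_one]

lemma Sys.contDiff {α β δ : ℝ} (hα : 0 < α) {w y : ℝ → ℝ} (hs : Sys α β δ w y) :
    ContDiff ℝ 2 w := by
  have hwc : Continuous w := continuous_iff_continuousAt.2 fun t => (hs t).1.continuousAt
  have hyc : Continuous y := continuous_iff_continuousAt.2 fun t => (hs t).2.continuousAt
  have hw' : deriv w = y := funext fun t => (hs t).1.deriv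
  have hy' : deriv y = fun t => δ * y t - β * (|w t| ^ α * w t - w t) :=
    funext fun t => (hs t).2.deriv
  have hy1 : ContDiff ℝ 1 y := by
    rw [contDiff_one_iff_deriv, hy']
    refine ⟨fun t => (hs t).2.differentiableAt, ?_⟩
    have := (g_cont hα).comp hwc
    simp only [Function.comp_def] at this
    fun_prop
  rw [show (2 : WithTop ℕ∞) = 1 + 1 by norm_num, contDiff_succ_iff_deriv, hw']
  exact ⟨fun t => (hs t).1.differentiableAt, by simp, hy1⟩

lemma exist_part {n α β : ℝ} (hα : 0 < α) (hβ0 : 0 < β) (hδ : 0 < 4 / α - (n - 2))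
    (hβ : β = 2 / α * (n - 2 - 2 / α)) {r₀ a b : ℝ} (hr₀ : 0 < r₀) (ha : 0 < a)
    (hb : 2 * a / α < b) (hE : En α β a (2 / α * a - b) = 0) :
      ∃ u : ℝ → ℝ,
        ContDiffOn ℝ 2 u (Set.Ioi 0) ∧
        (∀ r : ℝ, 0 < r →
          deriv (deriv u) r + ((n - 1) / r) * deriv u r + |u r| ^ α * u r = 0) ∧
        u r₀ = a * β ^ (1 / α) * r₀ ^ (-(2 / α)) ∧
        deriv u r₀ = -b * β ^ (1 / α) * r₀ ^ (-(2 / α) - 1) ∧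
        (∃ r : ℝ, 0 < r ∧ 0 < u r) ∧ (∃ r : ℝ, 0 < r ∧ u r < 0) ∧
        (∃ ε : ℝ, (ε = 1 ∨ ε = -1) ∧
          Tendsto (fun r : ℝ => r ^ (2 / α) * u r)
            (nhdsWithin 0 (Set.Ioi 0)) (nhds (ε * β ^ (1 / α)))) ∧
        (∃ C : ℝ, ∀ r : ℝ, 1 < r → |u r| ≤ C * r ^ (-(n - 2 - 2 / α))) ∧
        (∀ R : ℝ, 0 < R → ∃ r : ℝ, R < r ∧ u r = 0) := by
  have hb' : 2 / α * a - b ≠ 0 := by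
    have : 2 / α * a = 2 * a / α := by ring
    rw [this]; linarith
  obtain ⟨w, y, hw0, hy0, hs, ⟨tn, htn⟩, hlim, ⟨C, hC0, hC⟩, hosc⟩ := core hα hβ0 hδ ha hb' hE
  set κ : ℝ := β ^ (1 / α) with hκ
  have hκ0 : 0 < κ := by positivity
  have hκα : κ ^ α = β := pow_kappa hα hβ0
  set c : ℝ := 2 / α with hc
  have hc0 : 0 < c := by positivity
  have hcα : c * α = 2 := by rw [hc]; field_simp
  set ℓ : ℝ := Real.log r₀ with hℓ
  let u : ℝ → ℝ := fun r => κ * r ^ (-c) * w (Real.log r - ℓ)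
  have hud : ∀ r, 0 < r → HasDerivAt u (κ * r ^ (-c - 1) *
      (y (Real.log r - ℓ) - c * w (Real.log r - ℓ))) r := by
    intro r hr
    refine (tr_fwd (κ := κ) (p := -c) hr (hs (Real.log r - ℓ)).1).congr_deriv ?_
    ring
  have hud2 : ∀ r, 0 < r → HasDerivAt (deriv u) (κ * r ^ (-c - 1 - 1) *
      (((4 / α - (n - 2)) * y (Real.log r - ℓ) - β * (|w (Real.log r - ℓ)| ^ α * w (Real.log r - ℓ)
        - w (Real.log r - ℓ)) - c * y (Real.log r - ℓ)) + (-c - 1) *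
        (y (Real.log r - ℓ) - c * w (Real.log r - ℓ)))) r := by
    intro r hr
    have h1 := tr_fwd (f := fun t => y t - c * w t) (κ := κ) (p := -c - 1) hr
      ((hs (Real.log r - ℓ)).2.sub ((hs (Real.log r - ℓ)).1.const_mul c))
    refine h1.congr_of_eventuallyEq ?_
    filter_upwards [lt_mem_nhds hr] with x hx
    exact (hud x hx).deriv
  have hexp : ∀ t, Real.log (r₀ * Real.exp t) - ℓ = t := by
    intro t
    rw [Real.log_mul hr₀.ne' (Real.exp_pos t).ne', Real.log_exp]; ring
  have hu0 : u r₀ = a * κ * r₀ ^ (-c) := by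
    simp only [u, hℓ, sub_self, hw0]; ring
  refine ⟨u, ?_, ?_, hu0, ?_, ⟨r₀, hr₀, ?_⟩, ⟨r₀ * Real.exp tn, by positivity, ?_⟩,
    ⟨1, Or.inl rfl, ?_⟩, ⟨κ * C * (1 + r₀ ^ (-(4 / α - (n - 2)))), ?_⟩, ?_⟩
  · have h1 : ContDiffOn ℝ 2 (fun r : ℝ => κ * r ^ (-c)) (Set.Ioi 0) :=
      contDiffOn_const.mul (contDiffOn_id.rpow_const_of_ne fun x hx => (ne_of_gt hx))
    have h2 : ContDiffOn ℝ 2 (fun r : ℝ => w (Real.log r - ℓ)) (Set.Ioi 0) :=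
      (hs.contDiff hα).comp_contDiffOn
        ((contDiffOn_id.log fun x hx => (ne_of_gt hx)).sub contDiffOn_const)
    exact h1.mul h2
  · intro r hr
    rw [(hud2 r hr).deriv, (hud r hr).deriv]
    have h1 : |u r| ^ α = β * r ^ (-2 : ℝ) * |w (Real.log r - ℓ)| ^ α := by
      simp only [u]
      rw [abs_mul, abs_of_pos (by positivity : 0 < κ * r ^ (-c)),
        Real.mul_rpow (by positivity) (abs_nonneg _), Real.mul_rpow hκ0.le (by positivity), hκα,
        ← Real.rpow_mul hr.le, neg_mul, hcα]
    rw [h1]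
    simp only [u]
    have h2 : r ^ (-c) = r ^ (-c - 1 - 1) * r ^ 2 := by
      rw [← Real.rpow_natCast, ← Real.rpow_add hr]; congr 1; push_cast; ring
    have h3 : r ^ (-c - 1) = r ^ (-c - 1 - 1) * r := by
      rw [← Real.rpow_add_one hr.ne']; ring_nf
    have h4 : r ^ (-2 : ℝ) = (r ^ 2)⁻¹ := by
      rw [Real.rpow_neg hr.le]; norm_num
    rw [h2, h3, h4]
    generalize r ^ (-c - 1 - 1) = P
    generalize w (Real.log r - ℓ) = W
    generalize y (Real.log r - ℓ) = Y
    generalize |W| ^ α = G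
    have hβ' : β = c * (n - 2 - c) := hβ
    have h5 : 4 / α = 2 * c := by rw [hc]; ring
    rw [h5]
    field_simp
    rw [hβ']
    ring
  · rw [(hud r₀ hr₀).deriv, ← hℓ, sub_self, hw0, hy0]
    ring
  · rw [hu0]; positivity
  · simp only [u, hexp]
    exact mul_neg_of_pos_of_neg (by positivity) htn
  · rw [one_mul]
    have h1 : Tendsto (fun r => Real.log r - ℓ) (nhdsWithin 0 (Set.Ioi 0)) atBot :=
      tendsto_atBot_add_const_right _ _ Real.tendsto_log_nhdsGT_zero
    have h2 := (hlim.comp h1).const_mul κ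
    rw [mul_one] at h2
    refine h2.congr' ?_
    filter_upwards [self_mem_nhdsWithin] with r hr
    have hr : 0 < r := hr
    simp only [u, Function.comp_def]
    have : r ^ c * r ^ (-c) = 1 := by rw [← Real.rpow_add hr]; simp
    calc _ = (r ^ c * r ^ (-c)) * (κ * w (Real.log r - ℓ)) := by rw [this, one_mul]
      _ = _ := by ring
  · intro r hr
    have hr0 : 0 < r := by linarith
    set d : ℝ := 4 / α - (n - 2) with hd
    have h1 : Real.exp (d * (Real.log r - ℓ)) = r ^ d * r₀ ^ (-d) := by
      rw [Real.rpow_def_of_pos hr0, Real.rpow_def_of_pos hr₀, ← Real.exp_add, ← hℓ]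
      congr 1; ring
    have h2 := hC (Real.log r - ℓ)
    rw [h1] at h2
    have h3 : 1 ≤ r ^ d := Real.one_le_rpow hr.le hδ.le
    have h4 : r ^ (-(n - 2 - c)) = r ^ (-c) * r ^ d := by
      rw [← Real.rpow_add hr0]; congr 1; rw [hd, hc]; ring
    have h5 : |u r| = κ * r ^ (-c) * |w (Real.log r - ℓ)| := by
      simp only [u]
      rw [abs_mul, abs_of_pos (by positivity : 0 < κ * r ^ (-c))]
    rw [h5, h4]
    calc κ * r ^ (-c) * |w (Real.log r - ℓ)| ≤ κ * r ^ (-c) * (C * (1 + r ^ d * r₀ ^ (-d))) := by gcongr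
      _ ≤ κ * r ^ (-c) * (C * (r ^ d + r ^ d * r₀ ^ (-d))) := by gcongr
      _ = _ := by ring
  · intro R hR
    obtain ⟨t, ht, h⟩ := hosc (Real.log R - ℓ)
    refine ⟨r₀ * Real.exp t, ?_, by simp only [u, hexp, h, mul_zero]⟩
    rw [← Real.log_lt_log_iff hR (by positivity)]
    linarith [hexp t]

lemma uniq_sys {n α β : ℝ} (hα : 0 < α) (hβ0 : 0 < β)
    (hβ : β = 2 / α * (n - 2 - 2 / α)) {u : ℝ → ℝ} (hu : ContDiffOn ℝ 2 u (Set.Ioi 0))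
    (hode : ∀ r : ℝ, 0 < r →
        deriv (deriv u) r + ((n - 1) / r) * deriv u r + |u r| ^ α * u r = 0) :
    ∃ w y : ℝ → ℝ, Sys α β (4 / α - (n - 2)) w y ∧ ∀ r₀ a b : ℝ, 0 < r₀ →
      u r₀ = a * β ^ (1 / α) * r₀ ^ (-(2 / α)) →
      deriv u r₀ = -b * β ^ (1 / α) * r₀ ^ (-(2 / α) - 1) →
      w (Real.log r₀) = a ∧ y (Real.log r₀) = 2 / α * a - b := by
  set κ : ℝ := β ^ (1 / α) with hκ
  have hκ0 : 0 < κ := by positivity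
  have hκα : κ ^ α = β := pow_kappa hα hβ0
  set c : ℝ := 2 / α with hc
  have hcα : c * α = 2 := by rw [hc]; field_simp
  rw [show (2 : WithTop ℕ∞) = 1 + 1 by norm_num, contDiffOn_succ_iff_deriv_of_isOpen isOpen_Ioi] at hu
  have hu1 : ∀ r, 0 < r → HasDerivAt u (deriv u r) r := fun r hr =>
    (hu.1.differentiableAt (Ioi_mem_nhds hr)).hasDerivAt
  have hu2 : ∀ r, 0 < r → HasDerivAt (deriv u) (deriv (deriv u) r) r := fun r hr =>
    ((hu.2.2.differentiableOn one_ne_zero).differentiableAt (Ioi_mem_nhds hr)).hasDerivAt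
  refine ⟨fun s => κ⁻¹ * Real.exp (c * s) * u (Real.exp s),
    fun s => (κ⁻¹ * c) * Real.exp (c * s) * u (Real.exp s) +
      κ⁻¹ * Real.exp ((c + 1) * s) * deriv u (Real.exp s), ?_, ?_⟩
  · intro s
    have hX := Real.exp_pos s
    have e1 : Real.exp ((c + 1) * s) = Real.exp (c * s) * Real.exp s := by
      rw [← Real.exp_add]; congr 1; ring
    constructor
    · refine (tr_bwd (k := κ⁻¹) (p := c) (hu1 _ hX)).congr_deriv ?_
      beta_reduce; rw [e1]; ring
    · refine ((tr_bwd (k := κ⁻¹ * c) (p := c) (hu1 _ hX)).add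
        (tr_bwd (k := κ⁻¹) (p := c + 1) (hu2 _ hX))).congr_deriv ?_
      have h1 : |κ⁻¹ * Real.exp (c * s) * u (Real.exp s)| ^ α =
          β⁻¹ * Real.exp s ^ 2 * |u (Real.exp s)| ^ α := by
        rw [abs_mul, abs_of_pos (by positivity : 0 < κ⁻¹ * Real.exp (c * s)),
          Real.mul_rpow (by positivity) (abs_nonneg _), Real.mul_rpow (by positivity) (by positivity),
          Real.inv_rpow hκ0.le, hκα, ← Real.exp_mul, ← Real.exp_nat_mul]
        congr 3
        push_cast
        linear_combination s * hcα
      simp only [h1, e1]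
      have h2 : deriv (deriv u) (Real.exp s) = -(((n - 1) / Real.exp s) * deriv u (Real.exp s))
          - |u (Real.exp s)| ^ α * u (Real.exp s) := by linarith [hode _ hX]
      rw [h2]
      have hβ' : β = c * (n - 2 - c) := hβ
      have h5 : 4 / α = 2 * c := by rw [hc]; ring
      rw [h5]
      generalize |u (Real.exp s)| ^ α = G
      generalize u (Real.exp s) = U
      generalize deriv u (Real.exp s) = U'
      generalize Real.exp (c * s) = P
      generalize Real.exp s = X at *
      field_simp
      rw [hβ']
      ring
  · intro r₀ a b hr₀ h1 h2
    have e1 : Real.exp (c * Real.log r₀) * r₀ ^ (-c) = 1 := by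
      rw [Real.rpow_def_of_pos hr₀, ← Real.exp_add]
      simp [mul_comm]
    have e2 : Real.exp ((c + 1) * Real.log r₀) * r₀ ^ (-c - 1) = 1 := by
      rw [Real.rpow_def_of_pos hr₀, ← Real.exp_add, ← Real.exp_zero]
      congr 1; ring
    simp only [Real.exp_log hr₀, h1, h2]
    constructor
    · calc _ = (κ⁻¹ * κ) * (Real.exp (c * Real.log r₀) * r₀ ^ (-c)) * a := by ring
        _ = a := by rw [e1, inv_mul_cancel₀ hκ0.ne']; ring
    · calc _ = (κ⁻¹ * κ) * (Real.exp (c * Real.log r₀) * r₀ ^ (-c)) * (c * a) -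
            (κ⁻¹ * κ) * (Real.exp ((c + 1) * Real.log r₀) * r₀ ^ (-c - 1)) * b := by ring
        _ = c * a - b := by rw [e1, e2, inv_mul_cancel₀ hκ0.ne']; ring

theorem stmt_16 (N : ℕ) (hN : 3 ≤ N) (α β : ℝ)
    (hα1 : 2 / ((N : ℝ) - 2) < α) (hα2 : α < 4 / ((N : ℝ) - 2))
    (hβ : β = 2 / α * ((N : ℝ) - 2 - 2 / α)) :
    -- existence of the two-parameter family
    (∀ r₀ a b : ℝ, 0 < r₀ → 0 < a → a < ((α + 2) / 2) ^ (1 / α) →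
      2 * a / α < b →
      1 / 2 * (b - 2 * a / α) ^ 2 =
        a ^ 2 * ((((N : ℝ) - 2) * α - 2) / (α ^ 2 * (α + 2))) * (α + 2 - 2 * a ^ α) →
      ∃ u : ℝ → ℝ,
        -- u is a C² solution on all of (0,∞)
        ContDiffOn ℝ 2 u (Set.Ioi 0) ∧
        (∀ r : ℝ, 0 < r →
          deriv (deriv u) r + (((N : ℝ) - 1) / r) * deriv u r + |u r| ^ α * u r = 0) ∧
        -- with the prescribed data at r₀
        u r₀ = a * β ^ (1 / α) * r₀ ^ (-(2 / α)) ∧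
        deriv u r₀ = -b * β ^ (1 / α) * r₀ ^ (-(2 / α) - 1) ∧
        -- sign-changing
        (∃ r : ℝ, 0 < r ∧ 0 < u r) ∧ (∃ r : ℝ, 0 < r ∧ u r < 0) ∧
        -- singular at 0
        (∃ ε : ℝ, (ε = 1 ∨ ε = -1) ∧
          Tendsto (fun r : ℝ => r ^ (2 / α) * u r)
            (nhdsWithin 0 (Set.Ioi 0)) (nhds (ε * β ^ (1 / α)))) ∧
        -- decay at infinity
        (∃ C : ℝ, ∀ r : ℝ, 1 < r → |u r| ≤ C * r ^ (-((N : ℝ) - 2 - 2 / α))) ∧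
        -- oscillates indefinitely
        (∀ R : ℝ, 0 < R → ∃ r : ℝ, R < r ∧ u r = 0)) ∧
    -- distinct pairs (r₀, a) yield distinct solutions
    (∀ r₀ a b r₀' a' b' : ℝ, ∀ u : ℝ → ℝ,
      0 < r₀ → 0 < a → a < ((α + 2) / 2) ^ (1 / α) → 2 * a / α < b →
      1 / 2 * (b - 2 * a / α) ^ 2 =
        a ^ 2 * ((((N : ℝ) - 2) * α - 2) / (α ^ 2 * (α + 2))) * (α + 2 - 2 * a ^ α) →
      0 < r₀' → 0 < a' → a' < ((α + 2) / 2) ^ (1 / α) → 2 * a' / α < b' →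
      1 / 2 * (b' - 2 * a' / α) ^ 2 =
        a' ^ 2 * ((((N : ℝ) - 2) * α - 2) / (α ^ 2 * (α + 2))) * (α + 2 - 2 * a' ^ α) →
      ContDiffOn ℝ 2 u (Set.Ioi 0) →
      (∀ r : ℝ, 0 < r →
        deriv (deriv u) r + (((N : ℝ) - 1) / r) * deriv u r + |u r| ^ α * u r = 0) →
      u r₀ = a * β ^ (1 / α) * r₀ ^ (-(2 / α)) →
      deriv u r₀ = -b * β ^ (1 / α) * r₀ ^ (-(2 / α) - 1) →
      u r₀' = a' * β ^ (1 / α) * r₀' ^ (-(2 / α)) →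
      deriv u r₀' = -b' * β ^ (1 / α) * r₀' ^ (-(2 / α) - 1) →
      r₀ = r₀' ∧ a = a') := by
  have hN3 : (3 : ℝ) ≤ (N : ℝ) := by exact_mod_cast hN
  have hm : 0 < (N : ℝ) - 2 := by linarith
  have hα : 0 < α := lt_trans (by positivity) hα1
  have h1 : 2 / α < (N : ℝ) - 2 := by
    rw [div_lt_iff₀ hm] at hα1
    rw [div_lt_iff₀ hα]; linarith
  have hδ : 0 < 4 / α - ((N : ℝ) - 2) := by
    rw [lt_div_iff₀ hm] at hα2
    rw [sub_pos, lt_div_iff₀ hα]; linarith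
  have hβ0 : 0 < β := by
    rw [hβ]; exact mul_pos (by positivity) (by linarith)
  constructor
  · intro r₀ a b hr₀ ha _ hb h
    exact exist_part (n := (N : ℝ)) hα hβ0 hδ hβ hr₀ ha hb (En_init hα ha hβ h)
  · intro r₀ a b r₀' a' b' u hr ha _ hb h hr' ha' _ hb' h' hu hode i1 i2 i3 i4
    obtain ⟨w, y, hs, hv⟩ := uniq_sys (n := (N : ℝ)) hα hβ0 hβ hu hode
    obtain ⟨w1, y1⟩ := hv r₀ a b hr i1 i2
    obtain ⟨w2, y2⟩ := hv r₀' a' b' hr' i3 i4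
    have e1 : En α β (w (Real.log r₀)) (y (Real.log r₀)) = 0 := by
      rw [w1, y1]; exact En_init hα ha hβ h
    have e2 : En α β (w (Real.log r₀')) (y (Real.log r₀')) = 0 := by
      rw [w2, y2]; exact En_init hα ha' hβ h'
    have hy : y (Real.log r₀) ≠ 0 := by
      rw [y1]
      have : 2 / α * a = 2 * a / α := by ring
      rw [this]; linarith
    have hd := En_deriv hα (hs (Real.log r₀)).1 (hs (Real.log r₀)).2
    have hd0 : (4 / α - ((N : ℝ) - 2)) * y (Real.log r₀) ^ 2 ≠ 0 :=
      mul_ne_zero hδ.ne' (pow_ne_zero 2 hy)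
    have hmono := hs.mono hα hδ
    have hl : Real.log r₀ = Real.log r₀' := by
      rcases lt_trichotomy (Real.log r₀) (Real.log r₀') with hlt | heq | hgt
      · have := strict_of hmono hd hd0 hlt le_rfl hlt.le
        simp only [e1, e2, lt_irrefl] at this
      · exact heq
      · have := strict_of hmono hd hd0 hgt hgt.le le_rfl
        simp only [e1, e2, lt_irrefl] at this
    refine ⟨Real.log_injOn_pos hr hr' hl, ?_⟩
    rw [← w1, ← w2, hl]
end

section
/- Let a ∈ ℝ and let u ∈ C²((0,∞)) be a solution of u'' + ((N−1)/r + ar/2)u' + (a/α)u + |u|^α u = 0 on (0,∞). If r^{2/α} u(r) → β^{1/α} as r→0, then there exists a constant C such that |r^{2/α} u(r) − β^{1/α}| ≤ C r^ρ for all 0 < r ≤ 1. -/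
open Filter

lemma aux_gronwall (E dE φ dφ : ℝ → ℝ) (s0 : ℝ)
    (hE : ∀ s, HasDerivAt E (dE s) s) (hφ : ∀ s, HasDerivAt φ (dφ s) s)
    (h : ∀ s, s0 ≤ s → dE s ≤ - dφ s * E s) :
    ∀ s, s0 ≤ s → E s * Real.exp (φ s) ≤ E s0 * Real.exp (φ s0) := by
  have hd : ∀ s, HasDerivAt (fun s => E s * Real.exp (φ s))
      (dE s * Real.exp (φ s) + E s * (Real.exp (φ s) * dφ s)) s :=
    fun s => (hE s).mul (hφ s).exp
  have hanti : AntitoneOn (fun s => E s * Real.exp (φ s)) (Set.Ici s0) := by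
    apply antitoneOn_of_deriv_nonpos (convex_Ici s0)
    · exact fun s _ => (hd s).continuousAt.continuousWithinAt
    · exact fun s _ => (hd s).differentiableAt.differentiableWithinAt
    · intro s hs
      rw [interior_Ici] at hs
      rw [(hd s).deriv]
      have h1 := h s (le_of_lt hs)
      have h2 := Real.exp_pos (φ s)
      nlinarith
  intro s hs
  exact hanti (Set.mem_Ici.2 le_rfl) (Set.mem_Ici.2 hs) hs

lemma aux_decay (v p F : ℝ → ℝ) (ρ l k K δ : ℝ) (hρ : 0 < ρ) (hl : ρ < l) (hδ : 0 < δ)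
    (hK : 0 ≤ K)
    (hv : ∀ s, HasDerivAt v (p s) s)
    (hp : ∀ s, HasDerivAt p (-((ρ + l) - k * Real.exp (-2 * s)) * p s - F (v s)) s)
    (hF : ∀ x, |x| ≤ δ → |F x - ρ * l * x| ≤ K * x ^ 2)
    (hlim : Tendsto v atTop (nhds 0)) :
    ∃ C s0 : ℝ, ∀ s, s0 ≤ s → |v s| ≤ C * Real.exp (-ρ * s) := by
  obtain ⟨d, hd⟩ : ∃ d, d = l - ρ := ⟨_, rfl⟩
  have hd0 : 0 < d := by linarith
  let E : ℝ → ℝ := fun s => (p s + ρ * v s) ^ 2 + (p s + l * v s) ^ 2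
  have hE0 : ∀ s, 0 ≤ E s := fun s => by positivity
  let H : ℝ → ℝ := fun s => k * Real.exp (-2 * s) * p s - (F (v s) - ρ * l * v s)
  let dE : ℝ → ℝ := fun s => -2 * l * (p s + ρ * v s) ^ 2 - 2 * ρ * (p s + l * v s) ^ 2
    + 2 * ((p s + ρ * v s) + (p s + l * v s)) * H s
  have hE : ∀ s, HasDerivAt E (dE s) s := by
    intro s
    have h1 := (((hp s).add ((hv s).const_mul ρ)).pow 2).add
      (((hp s).add ((hv s).const_mul l)).pow 2)
    refine HasDerivAt.congr_deriv h1 ?_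
    simp only [dE, H, Pi.add_apply]
    push_cast
    ring
  -- quadratic bounds
  have hvE : ∀ s, v s ^ 2 ≤ 2 / d ^ 2 * E s := by
    intro s
    rw [div_mul_eq_mul_div, le_div_iff₀ (by positivity)]
    simp only [E, hd]
    nlinarith [sq_nonneg ((p s + ρ * v s) + (p s + l * v s))]
  have hpE : ∀ s, p s ^ 2 ≤ 2 * l ^ 2 / d ^ 2 * E s := by
    intro s
    rw [div_mul_eq_mul_div, le_div_iff₀ (by positivity)]
    have e1 : p s ^ 2 * d ^ 2 = (l * (p s + ρ * v s) - ρ * (p s + l * v s)) ^ 2 := by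
      rw [hd]; ring
    rw [e1]
    have e2 : ρ ^ 2 ≤ l ^ 2 := by nlinarith
    simp only [E]
    nlinarith [sq_nonneg (l * (p s + ρ * v s) + ρ * (p s + l * v s)),
      mul_le_mul_of_nonneg_right e2 (sq_nonneg (p s + l * v s))]
  have hsE : ∀ s, ((p s + ρ * v s) + (p s + l * v s)) ^ 2 ≤ 2 * E s := by
    intro s
    simp only [E]
    nlinarith [sq_nonneg ((p s + ρ * v s) - (p s + l * v s))]
  obtain ⟨M1, hM1⟩ : ∃ M1, M1 = 1 + 1 / d ^ 2 + l ^ 2 / d ^ 2 := ⟨_, rfl⟩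
  have hM10 : 0 < M1 := by rw [hM1]; positivity
  have hprod : ∀ x y c e : ℝ, x ^ 2 ≤ 2 * e → y ^ 2 ≤ 2 * c * e → |x| * |y| ≤ (1 + c) * e := by
    intro x y c e h1 h2
    have := two_mul_le_add_sq (|x|) (|y|)
    rw [sq_abs, sq_abs] at this
    nlinarith
  have hb1 : ∀ s, |(p s + ρ * v s) + (p s + l * v s)| * |v s| ≤ M1 * E s := by
    intro s
    refine (hprod _ _ (1 / d ^ 2) _ (hsE s) ?_).trans ?_
    · convert hvE s using 1; ring
    · apply mul_le_mul_of_nonneg_right _ (hE0 s)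
      rw [hM1]
      have : 0 ≤ l ^ 2 / d ^ 2 := by positivity
      linarith
  have hb2 : ∀ s, |(p s + ρ * v s) + (p s + l * v s)| * |p s| ≤ M1 * E s := by
    intro s
    refine (hprod _ _ (l ^ 2 / d ^ 2) _ (hsE s) ?_).trans ?_
    · convert hpE s using 1; ring
    · apply mul_le_mul_of_nonneg_right _ (hE0 s)
      rw [hM1]
      have : 0 ≤ 1 / d ^ 2 := by positivity
      linarith
  obtain ⟨M, hM⟩ : ∃ M, M = 2 * M1 * (|k| + K) := ⟨_, rfl⟩
  have hM0 : 0 ≤ M := by rw [hM]; positivity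
  have hmain : ∀ s, |v s| ≤ δ →
      dE s ≤ -2 * ρ * E s + M * (Real.exp (-2 * s) + |v s|) * E s := by
    intro s hs
    have h1 := hF _ hs
    set S := (p s + ρ * v s) + (p s + l * v s) with hS
    have hex := Real.exp_pos (-2 * s)
    have hH : |H s| ≤ |k| * Real.exp (-2 * s) * |p s| + K * (|v s| * |v s|) := by
      refine (abs_sub _ _).trans (add_le_add ?_ ?_)
      · rw [abs_mul, abs_mul, abs_of_pos hex]
      · refine h1.trans_eq ?_
        rw [← sq, sq_abs]
    have h2 : S * H s ≤ |S| * (|k| * Real.exp (-2 * s) * |p s| + K * (|v s| * |v s|)) :=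
      (le_abs_self _).trans (by rw [abs_mul]; exact mul_le_mul_of_nonneg_left hH (abs_nonneg _))
    have h3 := mul_le_mul_of_nonneg_left (hb2 s)
      (mul_nonneg (abs_nonneg k) hex.le)
    have h4 := mul_le_mul_of_nonneg_left (hb1 s) (mul_nonneg hK (abs_nonneg (v s)))
    rw [← hS] at h3 h4
    have h5 : 0 ≤ |k| * |v s| * (M1 * E s) := by have := hE0 s; positivity
    have h6 : 0 ≤ K * Real.exp (-2 * s) * (M1 * E s) := by have := hE0 s; positivity
    have h7 : 0 ≤ (l - ρ) * (p s + ρ * v s) ^ 2 := by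
      apply mul_nonneg (by linarith) (sq_nonneg _)
    have h8 : dE s = -2 * ρ * E s - 2 * ((l - ρ) * (p s + ρ * v s) ^ 2) + 2 * (S * H s) := by
      simp only [dE, E, hS]; ring
    rw [h8, hM]
    nlinarith
  -- eventually small
  have hexp0 : Tendsto (fun s : ℝ => Real.exp (-2 * s)) atTop (nhds 0) := by
    apply Real.tendsto_exp_atBot.comp
    exact tendsto_id.const_mul_atTop_of_neg (by norm_num)
  have hvabs : Tendsto (fun s => |v s|) atTop (nhds 0) := by simpa using hlim.abs
  have hsm : Tendsto (fun s => M * (Real.exp (-2 * s) + |v s|)) atTop (nhds 0) := by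
    simpa using (hexp0.add hvabs).const_mul M
  have hev := ((hsm.eventually_le_const hρ).and
    (hvabs.eventually_le_const hδ)).and (eventually_ge_atTop (0:ℝ))
  obtain ⟨s0, hs0⟩ := eventually_atTop.1 hev
  have step1 := aux_gronwall E dE (fun s => ρ * s) (fun _ => ρ) s0 hE
    (fun s => by simpa using (hasDerivAt_id s).const_mul ρ) (by
      intro s hs
      obtain ⟨⟨a1, a2⟩, -⟩ := hs0 s hs
      have := hmain s a2
      have := mul_le_mul_of_nonneg_right a1 (hE0 s)
      linarith)
  obtain ⟨C1, hC1⟩ : ∃ C1, C1 = E s0 * Real.exp (ρ * s0) := ⟨_, rfl⟩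
  have hC10 : 0 ≤ C1 := by rw [hC1]; have := hE0 s0; positivity
  have hbound : ∀ c C s, E s * Real.exp (2 * c * s) ≤ C →
      |v s| ≤ Real.sqrt (2 / d ^ 2 * C) * Real.exp (-c * s) := by
    intro c C s h
    have h1 : E s ≤ C * Real.exp (-c * s) ^ 2 := by
      have e : Real.exp (2 * c * s) * Real.exp (-c * s) ^ 2 = 1 := by
        rw [← Real.exp_nat_mul, ← Real.exp_add, Real.exp_eq_one_iff]; push_cast; ring
      have := mul_le_mul_of_nonneg_right h (sq_nonneg (Real.exp (-c * s)))
      rwa [mul_assoc, e, mul_one] at this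
    have hC0 : 0 ≤ C := le_trans (by have := hE0 s; positivity) h
    apply abs_le_of_sq_le_sq _ (by positivity)
    rw [mul_pow, Real.sq_sqrt (by positivity), mul_assoc]
    exact (hvE s).trans (mul_le_mul_of_nonneg_left h1 (by positivity))
  obtain ⟨C2, hC2⟩ : ∃ C2, C2 = Real.sqrt (2 / d ^ 2 * C1) := ⟨_, rfl⟩
  have hC20 : 0 ≤ C2 := by rw [hC2]; positivity
  have hv2 : ∀ s, s0 ≤ s → |v s| ≤ C2 * Real.exp (-(ρ / 2) * s) := by
    intro s hs
    rw [hC2]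
    apply hbound
    rw [hC1]
    convert step1 s hs using 3
    ring
  let φ : ℝ → ℝ := fun s => 2 * ρ * s + M * (Real.exp (-2 * s) / 2
    + C2 * (2 / ρ) * Real.exp (-(ρ / 2) * s))
  have hφ : ∀ s, HasDerivAt φ (2 * ρ - M * (Real.exp (-2 * s)
      + C2 * Real.exp (-(ρ / 2) * s))) s := by
    intro s
    have d1 : HasDerivAt (fun s : ℝ => Real.exp (-2 * s)) (Real.exp (-2 * s) * (-2)) s := by
      simpa using ((hasDerivAt_id s).const_mul (-2)).exp
    have d2 : HasDerivAt (fun s : ℝ => Real.exp (-(ρ / 2) * s))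
        (Real.exp (-(ρ / 2) * s) * (-(ρ / 2))) s := by
      simpa using ((hasDerivAt_id s).const_mul (-(ρ / 2))).exp
    have d3 : HasDerivAt (fun s : ℝ => 2 * ρ * s) (2 * ρ) s := by
      simpa using (hasDerivAt_id s).const_mul (2 * ρ)
    have := d3.add (((d1.div_const 2).add (d2.const_mul (C2 * (2 / ρ)))).const_mul M)
    refine HasDerivAt.congr_deriv this ?_
    field_simp
    ring
  have step2 := aux_gronwall E dE φ _ s0 hE hφ (by
      intro s hs
      obtain ⟨⟨a1, a2⟩, -⟩ := hs0 s hs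
      have h1 := hmain s a2
      have h2 := mul_le_mul_of_nonneg_right
        (mul_le_mul_of_nonneg_left (hv2 s hs) hM0) (hE0 s)
      linarith)
  refine ⟨Real.sqrt (2 / d ^ 2 * (E s0 * Real.exp (φ s0))), s0, fun s hs => ?_⟩
  apply hbound
  refine le_trans (mul_le_mul_of_nonneg_left (Real.exp_le_exp.2 ?_) (hE0 s)) (step2 s hs)
  simp only [φ]
  have : 0 ≤ M * (Real.exp (-2 * s) / 2 + C2 * (2 / ρ) * Real.exp (-(ρ / 2) * s)) := by
    positivity
  linarith

lemma aux_taylor (α β w : ℝ) (hw : 0 < w) (hwβ : w ^ α = β) :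
    ∃ K δ : ℝ, 0 ≤ K ∧ 0 < δ ∧ ∀ x, |x| ≤ δ →
      |(|w + x| ^ α * (w + x) - β * (w + x)) - α * β * x| ≤ K * x ^ 2 := by
  have h0 : HasDerivAt (fun y : ℝ => y ^ α) (α * w ^ (α - 1)) w :=
    Real.hasDerivAt_rpow_const (Or.inl hw.ne')
  obtain ⟨c, hc, hO⟩ := h0.differentiableAt.isBigO_sub.exists_pos
  rw [Asymptotics.isBigOWith_iff] at hO
  obtain ⟨ε, hε, hO⟩ := Metric.eventually_nhds_iff.1 hO
  refine ⟨|α + 1| * c, min (ε / 2) (w / 2), by positivity, by positivity, fun x hx => ?_⟩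
  have hx1 : |x| ≤ ε / 2 := hx.trans (min_le_left _ _)
  have hx2 : |x| ≤ w / 2 := hx.trans (min_le_right _ _)
  let G : ℝ → ℝ := fun x => (w + x) ^ (α + 1) - β * (w + x) - α * β * x
  have hG : ∀ y ∈ Metric.closedBall (0:ℝ) |x|,
      HasDerivWithinAt G ((α + 1) * (w + y) ^ α - β - α * β) (Metric.closedBall (0:ℝ) |x|) y := by
    intro y hy
    rw [mem_closedBall_zero_iff, Real.norm_eq_abs] at hy
    have hy' := abs_le.1 (hy.trans hx2)
    have d0 : HasDerivAt (fun y : ℝ => w + y) 1 y := (hasDerivAt_id y).const_add w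
    have d1 := d0.rpow_const (p := α + 1) (Or.inl (show w + y ≠ 0 by linarith))
    have d2 := (d1.sub (d0.const_mul β)).sub ((hasDerivAt_id y).const_mul (α * β))
    refine HasDerivAt.hasDerivWithinAt ?_
    refine HasDerivAt.congr_deriv d2 ?_
    rw [add_sub_cancel_right]; ring
  have hbd : ∀ y ∈ Metric.closedBall (0:ℝ) |x|,
      ‖(α + 1) * (w + y) ^ α - β - α * β‖ ≤ |α + 1| * c * |x| := by
    intro y hy
    rw [mem_closedBall_zero_iff, Real.norm_eq_abs] at hy
    have := @hO (w + y) (by rw [Real.dist_eq, add_sub_cancel_left]; linarith)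
    rw [hwβ, add_sub_cancel_left, Real.norm_eq_abs, Real.norm_eq_abs] at this
    rw [Real.norm_eq_abs, show (α + 1) * (w + y) ^ α - β - α * β
      = (α + 1) * ((w + y) ^ α - β) by ring, abs_mul, mul_assoc]
    exact mul_le_mul_of_nonneg_left
      (this.trans (mul_le_mul_of_nonneg_left hy hc.le)) (abs_nonneg _)
  have key := (convex_closedBall (0:ℝ) |x|).norm_image_sub_le_of_norm_hasDerivWithin_le hG hbd
    (Metric.mem_closedBall_self (abs_nonneg x)) (by simp : x ∈ Metric.closedBall (0:ℝ) |x|)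
  have hx' := abs_le.1 hx2
  have hpos : 0 < w + x := by linarith
  have hG0 : G 0 = 0 := by
    simp only [G, add_zero, Real.rpow_add_one hw.ne', hwβ]; ring
  rw [hG0, sub_zero, sub_zero, Real.norm_eq_abs, Real.norm_eq_abs] at key
  simp only [G, Real.rpow_add_one hpos.ne'] at key
  rw [abs_of_pos hpos, ← sq_abs x]
  linarith

theorem stmt_17 (N : ℕ) (hN : 3 ≤ N) (α α₀ β ρ : ℝ)
    (hα₀ : α₀ = 4 / ((N : ℝ) - 4 + 2 * Real.sqrt ((N : ℝ) - 1)))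
    (hα1 : 2 / ((N : ℝ) - 2) < α) (hα2 : α < α₀)
    (hβ : β = 2 / α * ((N : ℝ) - 2 - 2 / α))
    (hρ : ρ = 2 / α - ((N : ℝ) - 2) / 2 - Real.sqrt (((N : ℝ) - 2) ^ 2 / 4 - β * (α + 1)))
    (a : ℝ) (u : ℝ → ℝ) (huC2 : ContDiffOn ℝ 2 u (Set.Ioi 0))
    (huode : ∀ r : ℝ, 0 < r →
      deriv (deriv u) r + (((N : ℝ) - 1) / r + a * r / 2) * deriv u r + a / α * u r
        + |u r| ^ α * u r = 0)
    (hulim : Tendsto (fun r : ℝ => r ^ (2 / α) * u r)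
      (nhdsWithin 0 (Set.Ioi 0)) (nhds (β ^ (1 / α)))) :
    ∃ C : ℝ, ∀ r : ℝ, 0 < r → r ≤ 1 →
      |r ^ (2 / α) * u r - β ^ (1 / α)| ≤ C * r ^ ρ := by
  have hN' : (3:ℝ) ≤ N := by exact_mod_cast hN
  have hα : 0 < α := lt_trans (by apply div_pos <;> linarith) hα1
  obtain ⟨m, hm⟩ : ∃ m, m = 2 / α := ⟨_, rfl⟩
  have hm0 : 0 < m := by rw [hm]; positivity
  have hmα : α * m = 2 := by rw [hm]; field_simp
  have hmN : m < N - 2 := by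
    rw [div_lt_iff₀ (by linarith)] at hα1
    rw [hm, div_lt_iff₀ hα]; linarith
  rw [← hm] at hβ hρ hulim ⊢
  have hβ0 : 0 < β := by rw [hβ]; apply mul_pos hm0; linarith
  obtain ⟨q, hq⟩ : ∃ q, q = Real.sqrt ((N:ℝ) - 1) := ⟨_, rfl⟩
  have hq2 : q ^ 2 = N - 1 := by rw [hq]; exact Real.sq_sqrt (by linarith)
  have hq1 : 1 < q := by rw [hq]; exact Real.lt_sqrt_of_sq_lt (by linarith)
  have hmq : (N:ℝ) / 2 - 2 + q < m := by
    rw [hα₀, ← hq, lt_div_iff₀ (by nlinarith)] at hα2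
    rw [hm, lt_div_iff₀ hα]; nlinarith
  obtain ⟨D, hD⟩ : ∃ D, D = ((N : ℝ) - 2) ^ 2 / 4 - β * (α + 1) := ⟨_, rfl⟩
  have hDe : D = (m - (N - 2) / 2 + 1) ^ 2 - q ^ 2 := by
    rw [hD, hβ, hq2]
    linear_combination (-(N - 2 - m)) * hmα
  have hD0 : 0 < D := by rw [hDe]; nlinarith
  rw [← hD] at hρ
  have hsq := Real.sq_sqrt hD0.le
  have hsq0 := Real.sqrt_pos.2 hD0
  obtain ⟨l, hl⟩ : ∃ l, l = m - ((N : ℝ) - 2) / 2 + Real.sqrt D := ⟨_, rfl⟩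
  have hρl : ρ < l := by linarith
  have hsum : ρ + l = 2 * m - (N - 2) := by rw [hρ, hl]; ring
  have hprod : ρ * l = α * β := by
    have : ρ * l = (m - (N - 2) / 2) ^ 2 - Real.sqrt D ^ 2 := by rw [hρ, hl]; ring
    rw [this, hsq, hD, hβ]; ring
  have hρ0 : 0 < ρ := by
    have h1 : 0 < ρ * l := by rw [hprod]; positivity
    have hl0 : 0 < l := by linarith
    exact (pos_iff_pos_of_mul_pos h1).2 hl0
  obtain ⟨w, hw⟩ : ∃ w, w = β ^ (1 / α) := ⟨_, rfl⟩
  have hw0 : 0 < w := by rw [hw]; positivity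
  have hwβ : w ^ α = β := by
    rw [hw, ← Real.rpow_mul hβ0.le, one_div_mul_cancel hα.ne', Real.rpow_one]
  rw [← hw] at hulim ⊢
  obtain ⟨K, δ, hK, hδ, hF⟩ := aux_taylor α β w hw0 hwβ
  have hu1 : ∀ r, 0 < r → HasDerivAt u (deriv u r) r := fun r hr =>
    ((huC2.contDiffAt (Ioi_mem_nhds hr)).differentiableAt (by norm_num)).hasDerivAt
  have hu2 : ∀ r, 0 < r → HasDerivAt (deriv u) (deriv (deriv u) r) r := fun r hr => by
    have h1 : ContDiffOn ℝ 1 (deriv u) (Set.Ioi 0) :=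
      huC2.deriv_of_isOpen isOpen_Ioi (by norm_num)
    exact ((h1.contDiffAt (Ioi_mem_nhds hr)).differentiableAt (by norm_num)).hasDerivAt
  have he : ∀ s : ℝ, HasDerivAt (fun s : ℝ => Real.exp (-s)) (-Real.exp (-s)) s := fun s => by
    simpa using (hasDerivAt_neg s).exp
  have hA : ∀ s : ℝ, HasDerivAt (fun s : ℝ => Real.exp (-m * s)) (-m * Real.exp (-m * s)) s :=
    fun s => by simpa [mul_comm] using ((hasDerivAt_id s).const_mul (-m)).exp
  let v : ℝ → ℝ := fun s => Real.exp (-m * s) * u (Real.exp (-s)) - w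
  let p : ℝ → ℝ := fun s => -m * (Real.exp (-m * s) * u (Real.exp (-s)))
    - Real.exp (-m * s) * (Real.exp (-s) * deriv u (Real.exp (-s)))
  have hlim : Tendsto v atTop (nhds 0) := by
    have h1 : Tendsto (fun s : ℝ => Real.exp (-s)) atTop (nhdsWithin 0 (Set.Ioi 0)) :=
      tendsto_nhdsWithin_iff.2 ⟨Real.tendsto_exp_neg_atTop_nhds_zero,
        Eventually.of_forall fun s => Real.exp_pos _⟩
    have h2 := (hulim.comp h1).sub_const w
    rw [sub_self] at h2
    refine h2.congr fun s => ?_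
    simp only [Function.comp, v]
    rw [← Real.exp_mul]
    congr 3; ring
  have hv : ∀ s, HasDerivAt v (p s) s := by
    intro s
    have h := ((hA s).mul ((hu1 _ (Real.exp_pos (-s))).comp s (he s))).sub_const w
    refine HasDerivAt.congr_deriv h ?_
    simp only [p, Function.comp]; ring
  have hp : ∀ s, HasDerivAt p (-((ρ + l) - a / 2 * Real.exp (-2 * s)) * p s
      - (|w + v s| ^ α * (w + v s) - β * (w + v s))) s := by
    intro s
    have hr := Real.exp_pos (-s)
    have h := (((hA s).mul ((hu1 _ hr).comp s (he s))).const_mul (-m)).sub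
      ((hA s).mul ((he s).mul ((hu2 _ hr).comp s (he s))))
    refine HasDerivAt.congr_deriv h ?_
    have hode := huode _ hr
    have e1 : w + v s = Real.exp (-m * s) * u (Real.exp (-s)) := by simp only [v]; ring
    have e2 : Real.exp (-2 * s) = Real.exp (-s) ^ 2 := by
      rw [← Real.exp_nat_mul]; congr 1; push_cast; ring
    have e3 : Real.exp (-m * s) ^ α = Real.exp (-s) ^ 2 := by
      rw [← Real.exp_mul, ← e2]; congr 1; linear_combination (-s) * hmα
    rw [e1, abs_mul, Real.mul_rpow (abs_nonneg _) (abs_nonneg _), abs_of_pos (Real.exp_pos _),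
      e3, e2, hsum, hβ]
    simp only [p, Function.comp, Pi.mul_apply]
    generalize Real.exp (-m * s) = A at *
    generalize Real.exp (-s) = r at *
    have ha : a / α = a * m / 2 := by rw [hm]; field_simp
    rw [ha] at hode
    generalize |u r| ^ α = X at *
    field_simp at hode
    linear_combination (A * r / 2) * hode
  obtain ⟨C, s0, hC⟩ := aux_decay v p (fun x => |w + x| ^ α * (w + x) - β * (w + x))
    ρ l (a / 2) K δ hρ0 hρl hδ hK hv hp (by rw [hprod]; exact hF) hlim
  have hvc : Continuous v := continuous_iff_continuousAt.2 fun s => (hv s).continuousAt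
  obtain ⟨B, hB⟩ := (isCompact_Icc (a := (0:ℝ)) (b := s0)).exists_bound_of_continuousOn
    (f := fun s => v s / Real.exp (-ρ * s))
    (by
      apply Continuous.continuousOn
      exact hvc.div (by fun_prop) fun s => (Real.exp_pos _).ne')
  refine ⟨max C B, fun r hr hr1 => ?_⟩
  obtain ⟨s, hs⟩ : ∃ s, s = - Real.log r := ⟨_, rfl⟩
  have hs0 : 0 ≤ s := by rw [hs]; linarith [Real.log_nonpos hr.le hr1]
  have hrs : Real.exp (-s) = r := by rw [hs, neg_neg, Real.exp_log hr]
  have hpw : ∀ c, r ^ c = Real.exp (-c * s) := fun c => by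
    rw [Real.rpow_def_of_pos hr, hs]; congr 1; ring
  have hvs : r ^ m * u r - w = v s := by simp only [v, hrs, hpw]
  rw [hvs, hpw]
  have hpos := Real.exp_pos (-ρ * s)
  rcases le_total s0 s with h | h
  · exact (hC s h).trans (mul_le_mul_of_nonneg_right (le_max_left _ _) hpos.le)
  · have := hB s ⟨hs0, h⟩
    rw [norm_div, Real.norm_eq_abs, Real.norm_eq_abs, abs_of_pos hpos, div_le_iff₀ hpos] at this
    exact this.trans (mul_le_mul_of_nonneg_right (le_max_right _ _) hpos.le)
end

section
/- Let f ∈ C²((0,∞)) be a solution of the profile equation f'' + ((N−1)/r + r/2)f' + f/α + |f|^α f = 0 on (0,∞). Then: (1) the limit ℓ = lim_{r→0} r^{2/α} f(r) exists and ℓ ∈ {0, β^{1/α}, −β^{1/α}}; (2) lim_{r→0} r^{1+2/α} f'(r) = −(2/α) ℓ; (3) the limit μ = lim_{r→∞} r^{2/α} f(r) exists and is a finite real number. -/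
open Filter

lemma aux_anti (u u' : ℝ → ℝ) (s0 : ℝ) (h : ∀ s, s0 ≤ s → HasDerivAt u (u' s) s)
    (h' : ∀ s, s0 ≤ s → u' s ≤ 0) : AntitoneOn u (Set.Ici s0) := by
  apply antitoneOn_of_deriv_nonpos (convex_Ici s0)
  · intro s hs
    exact (h s hs).continuousAt.continuousWithinAt
  · intro s hs
    rw [interior_Ici] at hs
    exact (h s (le_of_lt hs)).differentiableAt.differentiableWithinAt
  · intro s hs
    rw [interior_Ici] at hs
    rw [(h s (le_of_lt hs)).deriv]
    exact h' s (le_of_lt hs)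

lemma aux_conv (u : ℝ → ℝ) (s0 m : ℝ) (h : AntitoneOn u (Set.Ici s0))
    (hm : ∀ s, s0 ≤ s → m ≤ u s) : ∃ L, Tendsto u atTop (nhds L) := by
  have h1 : Antitone (fun s => u (max s s0)) := by
    intro a b hab
    exact h (Set.mem_Ici.2 (le_max_right _ _)) (Set.mem_Ici.2 (le_max_right _ _))
      (max_le_max hab le_rfl)
  have h2 : BddBelow (Set.range (fun s => u (max s s0))) := by
    refine ⟨m, ?_⟩
    rintro _ ⟨s, rfl⟩
    exact hm _ (le_max_right _ _)
  refine ⟨_, (tendsto_atTop_ciInf h1 h2).congr' ?_⟩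
  filter_upwards [eventually_ge_atTop s0] with s hs
  simp [max_eq_left hs]

lemma aux_nonneg (x v : ℝ → ℝ) (s0 m L : ℝ) (h : ∀ s, s0 ≤ s → HasDerivAt x (v s) s)
    (hm : ∀ s, s0 ≤ s → m ≤ x s) (hv : Tendsto v atTop (nhds L)) : 0 ≤ L := by
  by_contra hL
  push Not at hL
  have h1 : ∀ᶠ s in atTop, v s < L / 2 := hv.eventually_lt_const (by linarith)
  obtain ⟨s1, hs1⟩ := eventually_atTop.1 h1
  set s2 := max s0 s1 with hs2
  have h2 : AntitoneOn (fun s => x s - L / 2 * s) (Set.Ici s2) := by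
    apply aux_anti _ (fun s => v s - L / 2 * 1)
    · intro s hs
      exact (h s (le_trans (le_max_left _ _) hs)).sub ((hasDerivAt_id s).const_mul (L / 2))
    · intro s hs
      have := hs1 s (le_trans (le_max_right _ _) hs)
      linarith
  set d := (x s2 - m + 1) / (-L / 2) with hd
  have hx2 := hm s2 (le_max_left _ _)
  have hd0 : 0 ≤ d := by
    apply div_nonneg <;> linarith
  have h3 := h2 (Set.mem_Ici.2 le_rfl) (Set.mem_Ici.2 (by linarith : s2 ≤ s2 + d)) (by linarith)
  have h4 := hm (s2 + d) (by have := le_max_left s0 s1; linarith)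
  have h5 : d * (-L / 2) = x s2 - m + 1 := by
    rw [hd]; exact div_mul_cancel₀ _ (by linarith)
  simp only at h3
  nlinarith

lemma aux_zero (x v : ℝ → ℝ) (s0 m L : ℝ) (h : ∀ s, s0 ≤ s → HasDerivAt x (v s) s)
    (hm : ∀ s, s0 ≤ s → |x s| ≤ m) (hv : Tendsto v atTop (nhds L)) : L = 0 := by
  have h1 := aux_nonneg x v s0 (-m) L h (fun s hs => (abs_le.1 (hm s hs)).1) hv
  have h2 := aux_nonneg (fun s => - x s) (fun s => - v s) s0 (-m) (-L)
    (fun s hs => (h s hs).neg) (fun s hs => by linarith [(abs_le.1 (hm s hs)).2]) hv.neg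
  linarith

noncomputable def VV (α β x : ℝ) : ℝ := |x| ^ (α + 2) / (α + 2) - β * x ^ 2 / 2

lemma VV_deriv (α β x : ℝ) (hα : 0 < α) :
    HasDerivAt (VV α β) (|x| ^ α * x - β * x) x := by
  have h1 := (hasDerivAt_abs_rpow x (p := α + 2) (by linarith)).div_const (α + 2)
  have h2 := (((hasDerivAt_id x).pow 2).const_mul β).div_const 2
  refine (h1.sub h2).congr_deriv ?_
  have : α + 2 ≠ 0 := by linarith
  rw [add_sub_cancel_right]
  field_simp
  simp
  ring

lemma VV_coer (α β : ℝ) (hα : 0 < α) (hβ : 0 < β) :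
    ∃ C : ℝ, 0 ≤ C ∧ ∀ x, β * x ^ 2 / 2 - C ≤ VV α β x := by
  set R := (β * (α + 2)) ^ (1 / α) with hR
  have hpos : 0 < β * (α + 2) := by positivity
  have hR0 : 0 < R := Real.rpow_pos_of_pos hpos _
  have hRα : R ^ α = β * (α + 2) := by
    rw [hR, ← Real.rpow_mul hpos.le, one_div_mul_cancel hα.ne', Real.rpow_one]
  refine ⟨β * R ^ 2, by positivity, fun x => ?_⟩
  unfold VV
  have e : |x| ^ (α + 2) = |x| ^ α * x ^ 2 := by
    rw [Real.rpow_add_of_nonneg (abs_nonneg _) hα.le (by norm_num)]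
    norm_num
  rcases le_total R |x| with h | h
  · have h1 : β * (α + 2) ≤ |x| ^ α := by
      rw [← hRα]; exact Real.rpow_le_rpow hR0.le h hα.le
    have h2 : β * x ^ 2 ≤ |x| ^ (α + 2) / (α + 2) := by
      rw [le_div_iff₀ (by linarith), e]
      nlinarith [sq_nonneg x]
    nlinarith [sq_nonneg R]
  · have h1 : 0 ≤ |x| ^ (α + 2) / (α + 2) := by positivity
    have h2 : x ^ 2 ≤ R ^ 2 := by
      rw [← sq_abs]; exact pow_le_pow_left₀ (abs_nonneg _) h 2
    nlinarith

lemma energy_deriv (α β : ℝ) (hα : 0 < α) (x v a : ℝ → ℝ) (s : ℝ)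
    (hx : HasDerivAt x (v s) s)
    (hv : HasDerivAt v (-a s * v s - (|x s| ^ α * x s - β * x s)) s) :
    HasDerivAt (fun s => v s ^ 2 / 2 + VV α β (x s)) (-(a s * v s ^ 2)) s := by
  have h1 := (hv.pow 2).div_const 2
  have h2 := (VV_deriv α β (x s) hα).comp s hx
  refine (h1.add h2).congr_deriv ?_
  simp
  ring

lemma energy_bdd (α β : ℝ) (hα : 0 < α) (hβ : 0 < β) (x v a : ℝ → ℝ) (s0 : ℝ)
    (hx : ∀ s, s0 ≤ s → HasDerivAt x (v s) s)
    (hv : ∀ s, s0 ≤ s → HasDerivAt v (-a s * v s - (|x s| ^ α * x s - β * x s)) s)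
    (ha : ∀ s, s0 ≤ s → 0 ≤ a s) :
    ∃ M, 0 < M ∧ ∀ s, s0 ≤ s → |x s| ≤ M ∧ |v s| ≤ M ∧
      |(|x s| ^ α * x s - β * x s)| ≤ M ∧ -M ≤ v s ^ 2 / 2 + VV α β (x s) := by
  obtain ⟨C, hC, hV⟩ := VV_coer α β hα hβ
  have hanti := aux_anti _ _ s0 (fun s hs => energy_deriv α β hα x v a s (hx s hs) (hv s hs))
    (fun s hs => by have := ha s hs; have := sq_nonneg (v s); simp; positivity)
  set E0 := v s0 ^ 2 / 2 + VV α β (x s0) with hE0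
  have hle : ∀ s, s0 ≤ s → v s ^ 2 / 2 + VV α β (x s) ≤ E0 := fun s hs =>
    hanti (Set.mem_Ici.2 le_rfl) (Set.mem_Ici.2 hs) hs
  have hEC : 0 ≤ E0 + C := by
    have := hV (x s0); have := sq_nonneg (v s0); have := mul_nonneg hβ.le (sq_nonneg (x s0))
    rw [hE0]; linarith
  set K := 2 * (E0 + C) / β + 2 * (E0 + C) + 1 with hK
  have hdiv : 0 ≤ 2 * (E0 + C) / β := by positivity
  have hK1 : 1 ≤ K := by linarith
  have hxK : ∀ s, s0 ≤ s → |x s| ≤ K := by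
    intro s hs
    have h1 : x s ^ 2 ≤ 2 * (E0 + C) / β := by
      rw [le_div_iff₀ hβ]
      have := hV (x s); have := hle s hs; have := sq_nonneg (v s)
      linarith
    apply abs_le_of_sq_le_sq _ (by linarith)
    nlinarith
  have hvK : ∀ s, s0 ≤ s → |v s| ≤ K := by
    intro s hs
    have h1 : v s ^ 2 ≤ 2 * (E0 + C) := by
      have := hV (x s); have := hle s hs; have := mul_nonneg hβ.le (sq_nonneg (x s))
      linarith
    apply abs_le_of_sq_le_sq _ (by linarith)
    nlinarith
  have hKα : 0 ≤ K ^ α := Real.rpow_nonneg (by linarith) _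
  refine ⟨K + C + (K ^ α * K + β * K), by positivity, fun s hs => ⟨?_, ?_, ?_, ?_⟩⟩
  · have := hxK s hs
    have : 0 ≤ K ^ α * K + β * K := by positivity
    linarith
  · have := hvK s hs
    have : 0 ≤ K ^ α * K + β * K := by positivity
    linarith
  · have h1 : |(|x s| ^ α * x s - β * x s)| ≤ K ^ α * K + β * K := by
      refine (abs_sub _ _).trans ?_
      rw [abs_mul, abs_mul, abs_of_pos hβ, abs_of_nonneg (Real.rpow_nonneg (abs_nonneg (x s)) α)]
      have := hxK s hs
      gcongr
    linarith
  · have := hV (x s); have := sq_nonneg (v s); have := mul_nonneg hβ.le (sq_nonneg (x s))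
    have : 0 ≤ K ^ α * K + β * K := by positivity
    linarith

lemma g_zero (α β y : ℝ) (hα : 0 < α) (h : |y| ^ α * y - β * y = 0) :
    y = 0 ∨ y = β ^ (1 / α) ∨ y = -β ^ (1 / α) := by
  by_cases hy : y = 0
  · exact Or.inl hy
  right
  have h1 : |y| ^ α = β := by
    have : (|y| ^ α - β) * y = 0 := by linarith
    rcases mul_eq_zero.1 this with h | h
    · linarith
    · exact absurd h hy
  have h2 : |y| = β ^ (1 / α) := by
    rw [← h1, ← Real.rpow_mul (abs_nonneg y), mul_one_div_cancel hα.ne', Real.rpow_one]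
  rw [← h2]
  rcases abs_choice y with h | h <;> rw [h] <;> simp

lemma conv_damped (α β c C : ℝ) (hα : 0 < α) (hβ : 0 < β) (hc : 0 < c) (x v a : ℝ → ℝ) (s0 : ℝ)
    (hx : ∀ s, s0 ≤ s → HasDerivAt x (v s) s)
    (hv : ∀ s, s0 ≤ s → HasDerivAt v (-a s * v s - (|x s| ^ α * x s - β * x s)) s)
    (ha : ∀ s, s0 ≤ s → c ≤ a s) (ha' : ∀ s, s0 ≤ s → a s ≤ C) :
    ∃ l, (l = 0 ∨ l = β ^ (1 / α) ∨ l = -β ^ (1 / α)) ∧ Tendsto x atTop (nhds l) ∧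
      Tendsto v atTop (nhds 0) := by
  obtain ⟨M, hM, hb⟩ := energy_bdd α β hα hβ x v a s0 hx hv (fun s hs => hc.le.trans (ha s hs))
  have hEd := fun s (hs : s0 ≤ s) => energy_deriv α β hα x v a s (hx s hs) (hv s hs)
  have hanti := aux_anti _ _ s0 hEd
    (fun s hs => by
      have := hc.le.trans (ha s hs); have := sq_nonneg (v s); simp; positivity)
  obtain ⟨e, he⟩ := aux_conv _ s0 (-M) hanti (fun s hs => (hb s hs).2.2.2)
  have hC : 0 < C := hc.trans_le ((ha s0 le_rfl).trans (ha' s0 le_rfl))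
  set K := 3 * (C * M + M) / c with hK
  have hK0 : 0 < K := by positivity
  have hKc : K * c = 3 * (C * M + M) := by rw [hK]; field_simp
  have hanti2 : AntitoneOn (fun s => K * (v s ^ 2 / 2 + VV α β (x s)) + v s ^ 3)
      (Set.Ici s0) := by
    apply aux_anti _ _ s0 (fun s hs => ((hEd s hs).const_mul K).add ((hv s hs).pow 3))
    intro s hs
    obtain ⟨h1, h2, h3, h4⟩ := hb s hs
    have h5 : |-a s * v s - (|x s| ^ α * x s - β * x s)| ≤ C * M + M := by
      refine (abs_sub _ _).trans ?_
      rw [abs_mul, abs_neg, abs_of_pos (hc.trans_le (ha s hs))]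
      have := ha' s hs
      gcongr
    have h6 := (abs_le.1 h5).2
    have h7 := ha s hs
    have h8 : K * (c * v s ^ 2) ≤ K * (a s * v s ^ 2) := by gcongr
    have h9 : v s ^ 2 * (-a s * v s - (|x s| ^ α * x s - β * x s)) ≤ v s ^ 2 * (C * M + M) := by
      gcongr
    have h10 : K * (c * v s ^ 2) = 3 * (C * M + M) * v s ^ 2 := by rw [← hKc]; ring
    norm_num
    linarith
  obtain ⟨e2, he2⟩ := aux_conv _ s0 (-(K * M) - M ^ 3) hanti2 (fun s hs => by
    obtain ⟨h1, h2, h3, h4⟩ := hb s hs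
    have h5 : |v s ^ 3| ≤ M ^ 3 := by rw [abs_pow]; gcongr
    have h6 := (abs_le.1 h5).1
    have : K * (-M) ≤ K * (v s ^ 2 / 2 + VV α β (x s)) := by gcongr
    linarith)
  have hv3 : Tendsto (fun s => v s ^ 3) atTop (nhds (e2 - K * e)) := by
    refine (he2.sub (he.const_mul K)).congr (fun s => ?_)
    ring
  have hva : Tendsto (fun s => |v s|) atTop (nhds (|e2 - K * e| ^ (1 / 3 : ℝ))) := by
    refine (hv3.abs.rpow_const (Or.inr (by norm_num))).congr (fun s => ?_)
    rw [abs_pow, ← Real.rpow_natCast, ← Real.rpow_mul (abs_nonneg _)]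
    norm_num
  have hv0 : Tendsto v atTop (nhds 0) := by
    rw [tendsto_zero_iff_abs_tendsto_zero]
    by_cases h0 : e2 - K * e = 0
    · rw [h0] at hva
      simpa [Function.comp_def] using hva
    · exfalso
      have hL : |e2 - K * e| ^ (1 / 3 : ℝ) ≠ 0 :=
        (Real.rpow_pos_of_pos (abs_pos.2 h0) _).ne'
      have hd := hv3.div (hva.pow 2) (pow_ne_zero 2 hL)
      have hvl : Tendsto v atTop (nhds ((e2 - K * e) / (|e2 - K * e| ^ (1 / 3 : ℝ)) ^ 2)) := by
        refine hd.congr (fun s => ?_)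
        simp only [Pi.div_apply]
        rw [sq_abs]
        by_cases hz : v s = 0
        · simp [hz]
        · field_simp
      have := aux_zero x v s0 M _ hx (fun s hs => (hb s hs).1) hvl
      rcases div_eq_zero_iff.1 this with h | h
      · exact h0 h
      · exact hL (pow_eq_zero_iff (two_ne_zero) |>.1 h)
  have hVe : Tendsto (fun s => VV α β (x s)) atTop (nhds e) := by
    have := he.sub ((hv0.pow 2).div_const 2)
    simp only [ne_eq, OfNat.ofNat_ne_zero, not_false_eq_true, zero_pow, zero_div, sub_zero] at this
    refine this.congr (fun s => ?_)
    ring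
  have hxl : ∃ l, Tendsto x atTop (nhds l) := by
    refine tendsto_of_no_upcrossings (s := Set.univ) dense_univ ?_ ?_ ?_
    · rintro p - q - hpq ⟨h1, h2⟩
      have hconst : ∀ y ∈ Set.Ioo p q, VV α β y = e := by
        intro y hy
        have hfr : ∃ᶠ s in atTop, x s = y := by
          rw [frequently_atTop]
          intro s1
          obtain ⟨s2, hs2, hx2⟩ := (frequently_atTop.1 h1) (max s0 s1)
          obtain ⟨s3, hs3, hx3⟩ := (frequently_atTop.1 h2) s2
          have hcont : ContinuousOn x (Set.Icc s2 s3) := fun s hs =>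
            (hx s ((le_max_left _ _).trans (hs2.trans hs.1))).continuousAt.continuousWithinAt
          obtain ⟨s4, hs4, hx4⟩ := intermediate_value_Icc hs3 hcont
            (show y ∈ Set.Icc (x s2) (x s3) from ⟨by linarith [hy.1], by linarith [hy.2]⟩)
          exact ⟨s4, (le_max_right _ _).trans (hs2.trans hs4.1), hx4⟩
        by_contra hne
        have := hVe.eventually_ne (fun h => hne h.symm)
        obtain ⟨s, hs, hs'⟩ := (hfr.and_eventually this).exists
        exact hs' (by rw [hs])
      have hfin : (Set.Ioo p q).Finite := by
        refine Set.Finite.subset (s := {0, β ^ (1 / α), -β ^ (1 / α)}) (Set.toFinite _) ?_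
        intro y hy
        have h3 : VV α β =ᶠ[nhds y] fun _ => e := by
          filter_upwards [isOpen_Ioo.mem_nhds hy] with z hz
          exact hconst z hz
        have h4 := (VV_deriv α β y hα).congr_of_eventuallyEq h3.symm
        have h5 := h4.unique (hasDerivAt_const y e)
        simpa using g_zero α β y hα h5
      exact (Set.Ioo_infinite hpq) hfin
    · exact ⟨M, by
        rw [eventually_map]
        filter_upwards [eventually_ge_atTop s0] with s hs
        exact (abs_le.1 (hb s hs).1).2⟩
    · exact ⟨-M, by
        rw [eventually_map]
        filter_upwards [eventually_ge_atTop s0] with s hs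
        exact (abs_le.1 (hb s hs).1).1⟩
  obtain ⟨l, hl⟩ := hxl
  refine ⟨l, ?_, hl, hv0⟩
  apply g_zero α β l hα
  have hav : Tendsto (fun s => -a s * v s) atTop (nhds 0) := by
    apply squeeze_zero_norm' (a := fun s => C * |v s|)
    · filter_upwards [eventually_ge_atTop s0] with s hs
      rw [Real.norm_eq_abs, abs_mul, abs_neg, abs_of_pos (hc.trans_le (ha s hs))]
      have := ha' s hs
      gcongr
    · simpa using (hv0.abs.const_mul C)
  have hg : Tendsto (fun s => -a s * v s - (|x s| ^ α * x s - β * x s)) atTop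
      (nhds (0 - (|l| ^ α * l - β * l))) :=
    hav.sub (((hl.abs.rpow_const (Or.inr hα.le)).mul hl).sub (hl.const_mul β))
  have := aux_zero v _ s0 M _ hv (fun s hs => (hb s hs).2.1) hg
  linarith

lemma conv_infty (α β c : ℝ) (hα : 0 < α) (hβ : 0 < β) (hc : 0 < c) (x v : ℝ → ℝ)
    (hx : ∀ s, HasDerivAt x (v s) s)
    (hv : ∀ s, HasDerivAt v
      (-(Real.exp (2 * s) / 2 - c) * v s - (|x s| ^ α * x s - β * x s)) s) :
    ∃ l, Tendsto x atTop (nhds l) := by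
  obtain ⟨s0, hs0⟩ : ∃ s0, ∀ s, s0 ≤ s → 2 * (3 + 2 * c) ≤ Real.exp (2 * s) := by
    have : Tendsto (fun s : ℝ => Real.exp (2 * s)) atTop atTop :=
      Real.tendsto_exp_atTop.comp (tendsto_id.const_mul_atTop (by norm_num))
    exact eventually_atTop.1 (this.eventually_ge_atTop _)
  obtain ⟨M, hM, hb⟩ := energy_bdd α β hα hβ x v (fun s => Real.exp (2 * s) / 2 - c) s0
    (fun s _ => hx s) (fun s _ => hv s) (fun s hs => by have := hs0 s hs; linarith)
  have he2 : ∀ s : ℝ, HasDerivAt (fun s => Real.exp (2 * s)) (2 * Real.exp (2 * s)) s := by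
    intro s
    refine (((hasDerivAt_id s).const_mul 2).exp).congr_deriv ?_
    simp; ring
  have hG : ∀ s : ℝ, HasDerivAt (fun s => Real.exp (Real.exp (2 * s) / 4))
      (Real.exp (Real.exp (2 * s) / 4) * (Real.exp (2 * s) / 2)) s := by
    intro s
    refine (((he2 s).div_const 4).exp).congr_deriv ?_
    ring
  have hY : ∀ s : ℝ, HasDerivAt (fun s => Real.exp (2 * s) * v s ^ 2 - 2 * M ^ 2)
      (2 * Real.exp (2 * s) * v s ^ 2 + Real.exp (2 * s) * (2 * v s *
        (-(Real.exp (2 * s) / 2 - c) * v s - (|x s| ^ α * x s - β * x s)))) s := by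
    intro s
    refine (((he2 s).mul ((hv s).pow 2)).sub_const _).congr_deriv ?_
    simp
  have hanti : AntitoneOn (fun s => (Real.exp (2 * s) * v s ^ 2 - 2 * M ^ 2) *
      Real.exp (Real.exp (2 * s) / 4)) (Set.Ici s0) := by
    apply aux_anti _ _ s0 (fun s hs => (hY s).mul (hG s))
    intro s hs
    obtain ⟨h1, h2, h3, h4⟩ := hb s hs
    have h5 := hs0 s hs
    set h := |x s| ^ α * x s - β * x s
    set e := Real.exp (2 * s)
    have hG0 := Real.exp_pos (e / 4)
    have he0 : 0 < e := Real.exp_pos _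
    have h6 : h ^ 2 ≤ M ^ 2 := sq_le_sq' (abs_le.1 h3).1 (abs_le.1 h3).2
    have h7 : 2 * v s ^ 2 + 2 * v s * (-(e / 2 - c) * v s - h) + (e * v s ^ 2 - 2 * M ^ 2) / 2
        ≤ 0 := by
      have h8 : 2 * (3 + 2 * c) * v s ^ 2 ≤ e * v s ^ 2 := by gcongr
      nlinarith [sq_nonneg (v s + h)]
    have h9 := mul_nonpos_of_nonneg_of_nonpos (mul_pos hG0 he0).le h7
    linarith
  set B := |(Real.exp (2 * s0) * v s0 ^ 2 - 2 * M ^ 2) * Real.exp (Real.exp (2 * s0) / 4)| with hB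
  have hB0 : 0 ≤ B := abs_nonneg _
  have hy : ∀ s, s0 ≤ s → Real.exp (2 * s) * v s ^ 2 ≤ B + 2 * M ^ 2 := by
    intro s hs
    have h1 := (hanti (Set.mem_Ici.2 le_rfl) (Set.mem_Ici.2 hs) hs).trans (le_abs_self _)
    simp only at h1
    rw [← hB] at h1
    have h2 : 1 ≤ Real.exp (Real.exp (2 * s) / 4) := Real.one_le_exp (by positivity)
    by_contra hcon
    push Not at hcon
    nlinarith
  set K := B + 2 * M ^ 2 + 1 with hK
  have hK1 : 1 ≤ K := by have := sq_nonneg M; linarith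
  have hvK : ∀ s, s0 ≤ s → |v s| ≤ K * Real.exp (-s) := by
    intro s hs
    have h1 : |Real.exp s * v s| ≤ K := by
      apply abs_le_of_sq_le_sq _ (by linarith)
      have h2 := hy s hs
      rw [mul_pow, ← Real.exp_nat_mul]
      push_cast
      nlinarith
    rw [abs_mul, abs_of_pos (Real.exp_pos s)] at h1
    rw [Real.exp_neg, ← div_eq_mul_inv, le_div_iff₀ (Real.exp_pos s)]
    linarith
  have hexp : ∀ s : ℝ, HasDerivAt (fun s => K * Real.exp (-s)) (-(K * Real.exp (-s))) s := by
    intro s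
    refine (((hasDerivAt_id s).neg.exp).const_mul K).congr_deriv ?_
    simp
  have hA : AntitoneOn (fun s => x s + K * Real.exp (-s)) (Set.Ici s0) := by
    apply aux_anti _ _ s0 (fun s hs => (hx s).add (hexp s))
    intro s hs
    have := (abs_le.1 (hvK s hs)).2
    linarith
  obtain ⟨l, hl⟩ := aux_conv _ s0 (-M) hA (fun s hs => by
    have := (abs_le.1 (hb s hs).1).1
    have : 0 < K * Real.exp (-s) := by positivity
    linarith)
  refine ⟨l - K * 0, ?_⟩
  have h0 : Tendsto (fun s : ℝ => Real.exp (-s)) atTop (nhds 0) := Real.tendsto_exp_neg_atTop_nhds_zero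
  refine (hl.sub (h0.const_mul K)).congr (fun s => ?_)
  ring

theorem stmt_18 (N : ℕ) (hN : 3 ≤ N) (α β : ℝ)
    (hα1 : 2 / ((N : ℝ) - 2) < α) (hα2 : α < 4 / ((N : ℝ) - 2))
    (hβ : β = 2 / α * ((N : ℝ) - 2 - 2 / α))
    (f : ℝ → ℝ) (hfC2 : ContDiffOn ℝ 2 f (Set.Ioi 0))
    (hfode : ∀ r : ℝ, 0 < r →
      deriv (deriv f) r + (((N : ℝ) - 1) / r + r / 2) * deriv f r + f r / α
        + |f r| ^ α * f r = 0) :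
    -- (1) and (2): the limit ℓ as r → 0 exists, lies in {0, β^{1/α}, −β^{1/α}},
    -- and r^{1+2/α} f'(r) → −(2/α) ℓ
    (∃ ℓ : ℝ, (ℓ = 0 ∨ ℓ = β ^ (1 / α) ∨ ℓ = -β ^ (1 / α)) ∧
      Tendsto (fun r : ℝ => r ^ (2 / α) * f r) (nhdsWithin 0 (Set.Ioi 0)) (nhds ℓ) ∧
      Tendsto (fun r : ℝ => r ^ (1 + 2 / α) * deriv f r)
        (nhdsWithin 0 (Set.Ioi 0)) (nhds (-(2 / α) * ℓ))) ∧
    -- (3) the limit μ as r → ∞ exists and is finite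
    (∃ μ : ℝ, Tendsto (fun r : ℝ => r ^ (2 / α) * f r) atTop (nhds μ)) := by
  have hN' : (3 : ℝ) ≤ N := by exact_mod_cast hN
  have hN2 : 0 < (N : ℝ) - 2 := by linarith
  have hα : 0 < α := lt_trans (by positivity) hα1
  set p := 2 / α with hp
  have hp0 : 0 < p := by positivity
  have hpα : p * α = 2 := by rw [hp]; field_simp
  have hp1 : p < (N : ℝ) - 2 := by
    rw [hp, div_lt_iff₀ hα]
    rw [div_lt_iff₀ hN2] at hα1
    linarith
  have hp2 : (N : ℝ) - 2 < 2 * p := by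
    rw [lt_div_iff₀ hN2] at hα2
    by_contra hcon
    push Not at hcon
    nlinarith
  have hβ0 : 0 < β := by rw [hβ]; apply mul_pos hp0; linarith
  set c := 2 * p - ((N : ℝ) - 2) with hc
  have hc0 : 0 < c := by linarith
  have hf1 : ∀ r, 0 < r → HasDerivAt f (deriv f r) r := by
    intro r hr
    exact ((hfC2.differentiableOn (by norm_num)).differentiableAt
      (isOpen_Ioi.mem_nhds hr)).hasDerivAt
  have hf2 : ∀ r, 0 < r → HasDerivAt (deriv f) (deriv (deriv f) r) r := by
    intro r hr
    have : ContDiffOn ℝ 1 (deriv f) (Set.Ioi 0) :=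
      hfC2.deriv_of_isOpen isOpen_Ioi (by norm_num)
    exact ((this.differentiableOn (by norm_num)).differentiableAt
      (isOpen_Ioi.mem_nhds hr)).hasDerivAt
  set w : ℝ → ℝ := fun t => Real.exp (p * t) * f (Real.exp t) with hw
  set w1 : ℝ → ℝ := fun t => Real.exp (p * t) *
    (p * f (Real.exp t) + Real.exp t * deriv f (Real.exp t)) with hw1
  have hep : ∀ t : ℝ, HasDerivAt (fun t => Real.exp (p * t)) (p * Real.exp (p * t)) t := by
    intro t
    refine (((hasDerivAt_id t).const_mul p).exp).congr_deriv ?_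
    simp; ring
  have hfe : ∀ t : ℝ, HasDerivAt (fun t => f (Real.exp t))
      (deriv f (Real.exp t) * Real.exp t) t := fun t =>
    (hf1 _ (Real.exp_pos t)).comp t (Real.hasDerivAt_exp t)
  have hfe' : ∀ t : ℝ, HasDerivAt (fun t => deriv f (Real.exp t))
      (deriv (deriv f) (Real.exp t) * Real.exp t) t := fun t =>
    (hf2 _ (Real.exp_pos t)).comp t (Real.hasDerivAt_exp t)
  have hwd : ∀ t, HasDerivAt w (w1 t) t := by
    intro t
    refine ((hep t).mul (hfe t)).congr_deriv ?_
    rw [hw1]; ring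
  have hw1d : ∀ t, HasDerivAt w1
      (-(Real.exp (2 * t) / 2 - c) * w1 t - (|w t| ^ α * w t - β * w t)) t := by
    intro t
    refine ((hep t).mul (((hfe t).const_mul p).add
      ((Real.hasDerivAt_exp t).mul (hfe' t)))).congr_deriv ?_
    have hode := hfode (Real.exp t) (Real.exp_pos t)
    have habs : |w t| ^ α = Real.exp (2 * t) * |f (Real.exp t)| ^ α := by
      simp only [hw]
      rw [abs_mul, abs_of_pos (Real.exp_pos _), Real.mul_rpow (Real.exp_pos _).le (abs_nonneg _),
        ← Real.exp_mul]
      congr 2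
      linear_combination t * hpα
    rw [habs]
    have he2 : Real.exp (2 * t) = Real.exp t ^ 2 := by
      rw [← Real.exp_nat_mul]; norm_num
    rw [he2]
    simp only [hw, hw1, Pi.add_apply, Pi.mul_apply]
    have hr := Real.exp_pos t
    have hia : f (Real.exp t) / α = f (Real.exp t) * (p / 2) := by
      rw [hp]; field_simp
    rw [hia] at hode
    generalize Real.exp t = r at *
    generalize |f r| ^ α = q at *
    have hode2 : r ^ 2 * deriv (deriv f) r + (((N : ℝ) - 1) * r + r ^ 3 / 2) * deriv f r
        + r ^ 2 * (f r * (p / 2)) + r ^ 2 * (q * f r) = 0 := by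
      have : r ^ 2 * deriv (deriv f) r + (((N : ℝ) - 1) * r + r ^ 3 / 2) * deriv f r
        + r ^ 2 * (f r * (p / 2)) + r ^ 2 * (q * f r) = r ^ 2 * (deriv (deriv f) r
        + (((N : ℝ) - 1) / r + r / 2) * deriv f r + f r * (p / 2) + q * f r) := by
        field_simp
      rw [this, hode, mul_zero]
    rw [hβ, hc]
    linear_combination Real.exp (p * t) * hode2
  have hrp : ∀ r : ℝ, 0 < r → Real.exp (p * Real.log r) = r ^ p := by
    intro r hr
    rw [Real.rpow_def_of_pos hr, mul_comm]
  refine ⟨?_, ?_⟩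
  · obtain ⟨s0, hs0⟩ : ∃ s0, ∀ s, s0 ≤ s → Real.exp (-(2 * s)) ≤ c := by
      have : Tendsto (fun s : ℝ => Real.exp (-(2 * s))) atTop (nhds 0) :=
        Real.tendsto_exp_neg_atTop_nhds_zero.comp (tendsto_id.const_mul_atTop (by norm_num))
      exact eventually_atTop.1 (this.eventually_le_const hc0)
    obtain ⟨l, hl, hxl, hvl⟩ := conv_damped α β (c / 2) c hα hβ0 (by linarith)
      (fun s => w (-s)) (fun s => -w1 (-s)) (fun s => c - Real.exp (-(2 * s)) / 2) s0
      (fun s _ => by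
        refine ((hwd (-s)).comp s (hasDerivAt_neg s)).congr_deriv ?_
        ring)
      (fun s _ => by
        refine ((hw1d (-s)).comp s (hasDerivAt_neg s)).neg.congr_deriv ?_
        simp only [mul_neg]
        ring)
      (fun s hs => by have := hs0 s hs; linarith)
      (fun s hs => by have := Real.exp_pos (-(2 * s)); linarith)
    have hlog : Tendsto (fun r : ℝ => -Real.log r) (nhdsWithin 0 (Set.Ioi 0)) atTop :=
      tendsto_neg_atBot_atTop.comp Real.tendsto_log_nhdsGT_zero
    have hA := hxl.comp hlog
    have hB := hvl.comp hlog
    have hA' : Tendsto (fun r : ℝ => r ^ p * f r) (nhdsWithin 0 (Set.Ioi 0)) (nhds l) := by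
      refine hA.congr' ?_
      filter_upwards [self_mem_nhdsWithin] with r hr
      simp only [Function.comp, neg_neg, hw]
      rw [hrp r hr, Real.exp_log hr]
    refine ⟨l, hl, hA', ?_⟩
    have hD := hB.neg.sub (hA'.const_mul p)
    have e : -0 - p * l = -p * l := by ring
    rw [e] at hD
    refine hD.congr' ?_
    filter_upwards [self_mem_nhdsWithin] with r hr
    simp only [Function.comp, neg_neg, hw1]
    rw [hrp r hr, Real.exp_log hr, Real.rpow_add hr, Real.rpow_one]
    ring
  · obtain ⟨l, hl⟩ := conv_infty α β c hα hβ0 hc0 w w1 hwd hw1d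
    refine ⟨l, (hl.comp Real.tendsto_log_atTop).congr' ?_⟩
    filter_upwards [eventually_gt_atTop 0] with r hr
    simp only [Function.comp, hw]
    rw [hrp r hr, Real.exp_log hr]
end

section
/- Let f ∈ C²((0,∞)) be a solution of the profile equation f'' + ((N−1)/r + r/2)f' + f/α + |f|^α f = 0 on (0,∞) such that r^{2/α} f(r) → β^{1/α} as r→0, and define U(t,x) = t^{−1/α} f(|x|/√t) for t>0, x∈ℝ^N∖{0}. Then there exists a constant C such that | |x|^{2/α} U(t,x) − β^{1/α} | ≤ C (|x|/(|x|+√t))^ρ for all t > 0 and all x ≠ 0. -/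
open Filter

noncomputable section

/-- `N`-dimensional Euclidean space. -/
abbrev Euc (N : ℕ) := EuclideanSpace ℝ (Fin N)


lemma gron_s19 (V V' : ℝ → ℝ) (a c μ r0 : ℝ) (hμ : 0 < μ) (hc : 0 ≤ c) (hr0 : 0 < r0)
    (hV : ∀ r, 0 < r → 0 ≤ V r)
    (hd : ∀ r, 0 < r → HasDerivAt V (V' r) r)
    (hi : ∀ r, 0 < r → r ≤ r0 → (a - c * r ^ μ) * V r ≤ r * V' r) :
    ∃ C, ∀ r, 0 < r → r ≤ r0 → V r ≤ C * r ^ a := by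
  have hG : ∀ r, 0 < r → HasDerivAt (fun r => V r * (r ^ (-a) * Real.exp (c * r ^ μ / μ)))
      (V' r * (r ^ (-a) * Real.exp (c * r ^ μ / μ)) + V r * ((-a * r ^ (-a - 1)) * Real.exp (c * r ^ μ / μ)
        + r ^ (-a) * (Real.exp (c * r ^ μ / μ) * (c * (μ * r ^ (μ - 1)) / μ)))) r := by
    intro r hr
    have h1 : HasDerivAt (fun r : ℝ => r ^ (-a)) (-a * r ^ (-a - 1)) r :=
      Real.hasDerivAt_rpow_const (Or.inl hr.ne')
    have h2 : HasDerivAt (fun r : ℝ => r ^ μ) (μ * r ^ (μ - 1)) r :=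
      Real.hasDerivAt_rpow_const (Or.inl hr.ne')
    exact (hd r hr).mul (h1.mul ((h2.const_mul c).div_const μ).exp)
  have hmono : MonotoneOn (fun r => V r * (r ^ (-a) * Real.exp (c * r ^ μ / μ))) (Set.Ioc 0 r0) := by
    apply monotoneOn_of_deriv_nonneg (convex_Ioc 0 r0)
    · intro r hr
      exact (hG r hr.1).continuousAt.continuousWithinAt
    · intro r hr
      rw [interior_Ioc] at hr
      exact (hG r hr.1).differentiableAt.differentiableWithinAt
    · intro r hr
      rw [interior_Ioc] at hr
      rw [(hG r hr.1).deriv]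
      have hrp := hr.1
      have hii := hi r hrp hr.2.le
      rw [Real.rpow_sub_one hrp.ne', Real.rpow_sub_one hrp.ne']
      have e : V' r * (r ^ (-a) * Real.exp (c * r ^ μ / μ)) + V r * ((-a * (r ^ (-a) / r)) * Real.exp (c * r ^ μ / μ)
        + r ^ (-a) * (Real.exp (c * r ^ μ / μ) * (c * (μ * (r ^ μ / r)) / μ)))
        = (r ^ (-a) * Real.exp (c * r ^ μ / μ) / r) * (r * V' r - (a - c * r ^ μ) * V r) := by
        field_simp
        ring
      rw [e]
      have := Real.rpow_pos_of_pos hrp (-a)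
      apply mul_nonneg (by positivity) (by linarith)
  refine ⟨V r0 * (r0 ^ (-a) * Real.exp (c * r0 ^ μ / μ)), fun r hr hrr => ?_⟩
  have h := hmono ⟨hr, hrr⟩ ⟨hr0, le_rfl⟩ hrr
  simp only at h
  have hp := Real.rpow_pos_of_pos hr a
  have hpm := Real.rpow_pos_of_pos hr (-a)
  have hpp := Real.rpow_pos_of_pos hr μ
  have hE : 1 ≤ Real.exp (c * r ^ μ / μ) := Real.one_le_exp (by positivity)
  have h1 : V r * r ^ (-a) ≤ V r0 * (r0 ^ (-a) * Real.exp (c * r0 ^ μ / μ)) := by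
    refine le_trans ?_ h
    apply mul_le_mul_of_nonneg_left _ (hV r hr)
    nlinarith
  have e : V r = V r * r ^ (-a) * r ^ a := by
    rw [mul_assoc, ← Real.rpow_add hr]; simp
  rw [e]
  exact mul_le_mul_of_nonneg_right h1 hp.le

lemma near_zero (l1 l2 K rK : ℝ) (hl1 : 0 < l1) (hl : l1 < l2) (hK : 0 ≤ K) (hrK : 0 < rK)
    (v p h : ℝ → ℝ)
    (hv : ∀ r, 0 < r → HasDerivAt v (p r / r) r)
    (hp : ∀ r, 0 < r → HasDerivAt p (((l1 + l2) * p r - l1 * l2 * v r + h r) / r) r)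
    (hh : ∀ r, 0 < r → r ≤ rK → |h r| ≤ K * (r ^ 2 * |p r| + v r ^ 2))
    (hlim : Tendsto v (nhdsWithin 0 (Set.Ioi 0)) (nhds 0)) :
    ∃ C r0, 0 < r0 ∧ r0 ≤ 1 ∧ ∀ r, 0 < r → r ≤ r0 → |v r| ≤ C * r ^ l1 := by
  have hd0 : 0 < l2 - l1 := by linarith
  set V : ℝ → ℝ := fun r => (p r - l2 * v r) ^ 2 + (p r - l1 * v r) ^ 2 with hVdef
  set V' : ℝ → ℝ := fun r => (2 * l1 * (p r - l2 * v r) ^ 2 + 2 * l2 * (p r - l1 * v r) ^ 2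
      + 2 * h r * ((p r - l2 * v r) + (p r - l1 * v r))) / r with hV'def
  have hV0 : ∀ r, 0 < r → 0 ≤ V r := fun r _ => by simp only [hVdef]; positivity
  have hdV : ∀ r, 0 < r → HasDerivAt V (V' r) r := by
    intro r hr
    have h1 := ((hp r hr).sub ((hv r hr).const_mul l2)).pow 2
    have h2 := ((hp r hr).sub ((hv r hr).const_mul l1)).pow 2
    have h3 := h1.add h2
    refine h3.congr_deriv ?_
    simp only [hV'def, Pi.sub_apply]
    push_cast
    field_simp
    ring
  have hvV : ∀ r, v r ^ 2 ≤ 2 / (l2 - l1) ^ 2 * V r := by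
    intro r
    simp only [hVdef]
    rw [div_mul_eq_mul_div, le_div_iff₀ (by positivity)]
    nlinarith [sq_nonneg ((p r - l2 * v r) + (p r - l1 * v r))]
  set K' := 4 * K * (l2 + 1) / (l2 - l1) with hK'
  have hK'0 : 0 ≤ K' := by
    have : 0 < l2 + 1 := by linarith
    positivity
  have key : ∀ r, 0 < r → r ≤ rK → (2 * l1 - K' * (r ^ 2 + |v r|)) * V r ≤ r * V' r := by
    intro r hr hrr
    have hb := hh r hr hrr
    set y1 := p r - l2 * v r with hy1
    set y2 := p r - l1 * v r with hy2
    have ev : v r = (y2 - y1) / (l2 - l1) := by rw [hy1, hy2]; field_simp; ring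
    have ep : p r = (l2 * y2 - l1 * y1) / (l2 - l1) := by rw [hy1, hy2]; field_simp; ring
    have hS : |v r| ≤ (|y1| + |y2|) / (l2 - l1) := by
      conv_lhs => rw [ev]
      rw [abs_div, abs_of_pos hd0]
      gcongr
      have := abs_sub y2 y1
      linarith
    have hP : |p r| ≤ l2 * (|y1| + |y2|) / (l2 - l1) := by
      conv_lhs => rw [ep]
      rw [abs_div, abs_of_pos hd0]
      gcongr
      have h1 := abs_sub (l2 * y2) (l1 * y1)
      rw [abs_mul, abs_mul, abs_of_pos hl1, abs_of_pos (hl1.trans hl)] at h1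
      nlinarith [abs_nonneg y1]
    have hy : |y1 + y2| ≤ |y1| + |y2| := abs_add_le _ _
    set S := |y1| + |y2| with hSd
    have hS0 : 0 ≤ S := by positivity
    have hS2 : S ^ 2 ≤ 2 * V r := by
      have : V r = |y1| ^ 2 + |y2| ^ 2 := by simp [hVdef, hy1, hy2]
      rw [this, hSd]; nlinarith [sq_nonneg (|y1| - |y2|)]
    have hb2 : |h r| ≤ K * ((l2 + 1) * (r ^ 2 + |v r|) * S / (l2 - l1)) := by
      refine hb.trans (mul_le_mul_of_nonneg_left ?_ hK)
      have a1 : r ^ 2 * |p r| ≤ r ^ 2 * (l2 * S / (l2 - l1)) := by gcongr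
      have a2 : v r ^ 2 ≤ |v r| * (S / (l2 - l1)) := by
        rw [← sq_abs, sq]; gcongr
      have a3 : (l2 + 1) * (r ^ 2 + |v r|) * S / (l2 - l1) = r ^ 2 * (l2 * S / (l2 - l1))
        + |v r| * (S / (l2 - l1)) + (r ^ 2 * (S / (l2 - l1)) + l2 * (|v r| * (S / (l2 - l1)))) := by
        field_simp; ring
      have a4 : 0 ≤ r ^ 2 * (S / (l2 - l1)) + l2 * (|v r| * (S / (l2 - l1))) := by
        have : 0 < l2 := hl1.trans hl
        positivity
      rw [a3]; linarith
    have hb3 : |2 * h r * (y1 + y2)| ≤ K' * (r ^ 2 + |v r|) * V r := by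
      rw [abs_mul, abs_mul, abs_two]
      have : 0 < l2 + 1 := by linarith
      calc 2 * |h r| * |y1 + y2| ≤ 2 * (K * ((l2 + 1) * (r ^ 2 + |v r|) * S / (l2 - l1))) * S := by
            gcongr
        _ = 2 * K * (l2 + 1) / (l2 - l1) * (r ^ 2 + |v r|) * S ^ 2 := by field_simp
        _ ≤ 2 * K * (l2 + 1) / (l2 - l1) * (r ^ 2 + |v r|) * (2 * V r) := by gcongr
        _ = _ := by rw [hK']; field_simp; ring
    have e : r * V' r = 2 * l1 * y1 ^ 2 + 2 * l2 * y2 ^ 2 + 2 * h r * (y1 + y2) := by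
      simp only [hV'def, ← hy1, ← hy2]
      rw [mul_div_cancel₀ _ hr.ne']
    have e2 : V r = y1 ^ 2 + y2 ^ 2 := by simp [hVdef, hy1, hy2]
    rw [e]
    have := neg_abs_le (2 * h r * (y1 + y2))
    nlinarith [sq_nonneg y2, sq_nonneg y1]
  -- step 1
  obtain ⟨r0, hr0, hr1, hrK', hsmall⟩ : ∃ r0, 0 < r0 ∧ r0 ≤ 1 ∧ r0 ≤ rK ∧ ∀ r, 0 < r → r ≤ r0 →
      K' * (r ^ 2 + |v r|) ≤ l1 := by
    have t1 : Tendsto (fun r : ℝ => K' * (r ^ 2 + |v r|)) (nhdsWithin 0 (Set.Ioi 0)) (nhds (K' * (0 ^ 2 + |0|))) := by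
      have t2 : Tendsto (fun r : ℝ => r ^ 2) (nhdsWithin 0 (Set.Ioi 0)) (nhds (0 ^ 2)) :=
        ((continuous_pow 2).tendsto (0:ℝ)).mono_left nhdsWithin_le_nhds
      exact (t2.add hlim.abs).const_mul K'
    have t3 := t1.eventually (gt_mem_nhds (show K' * (0 ^ 2 + |0|) < l1 by simpa using hl1))
    rw [eventually_nhdsWithin_iff, Metric.eventually_nhds_iff] at t3
    obtain ⟨ε, hε, t4⟩ := t3
    refine ⟨min (ε / 2) (min 1 rK), by positivity, (min_le_right _ _).trans (min_le_left _ _),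
      (min_le_right _ _).trans (min_le_right _ _), fun r hr hrr => (t4 ?_ hr).le⟩
    have := hrr.trans (min_le_left _ _)
    rw [Real.dist_eq, sub_zero, abs_of_pos hr]; linarith
  obtain ⟨C1, hC1⟩ := gron_s19 V V' l1 0 1 r0 one_pos le_rfl hr0 hV0 hdV (by
    intro r hr hrr
    refine le_trans ?_ (key r hr (hrr.trans hrK'))
    apply mul_le_mul_of_nonneg_right _ (hV0 r hr)
    have := hsmall r hr hrr
    linarith)
  have hvb : ∀ a C : ℝ, (∀ r, 0 < r → r ≤ r0 → V r ≤ C * r ^ a) →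
      ∃ D, 0 ≤ D ∧ ∀ r, 0 < r → r ≤ r0 → |v r| ≤ D * r ^ (a / 2) := by
    intro a C hC
    refine ⟨Real.sqrt (2 / (l2 - l1) ^ 2 * C), Real.sqrt_nonneg _, fun r hr hrr => ?_⟩
    have h1 := Real.abs_le_sqrt ((hvV r).trans
      (mul_le_mul_of_nonneg_left (hC r hr hrr) (by positivity : 0 ≤ 2 / (l2 - l1) ^ 2)))
    rw [← mul_assoc, Real.sqrt_mul' _ (Real.rpow_pos_of_pos hr a).le] at h1
    rwa [Real.sqrt_eq_rpow (r ^ a), ← Real.rpow_mul hr.le, mul_one_div] at h1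
  obtain ⟨D, hD0, hD⟩ := hvb _ _ hC1
  obtain ⟨C2, hC2⟩ := gron_s19 V V' (2 * l1) (K' * (1 + D)) (min 2 (l1 / 2)) r0 (by positivity)
    (by positivity) hr0 hV0 hdV (by
      intro r hr hrr
      refine le_trans ?_ (key r hr (hrr.trans hrK'))
      apply mul_le_mul_of_nonneg_right _ (hV0 r hr)
      have b1 : r ^ 2 ≤ r ^ (min 2 (l1 / 2)) := by
        rw [← Real.rpow_two]
        exact Real.rpow_le_rpow_of_exponent_ge hr (hrr.trans hr1) (min_le_left _ _)
      have b2 : r ^ (l1 / 2) ≤ r ^ (min 2 (l1 / 2)) := 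
        Real.rpow_le_rpow_of_exponent_ge hr (hrr.trans hr1) (min_le_right _ _)
      have b3 := hD r hr hrr
      have b4 : r ^ 2 + |v r| ≤ (1 + D) * r ^ (min 2 (l1 / 2)) := by nlinarith
      nlinarith)
  obtain ⟨D2, -, hD2⟩ := hvb _ _ hC2
  refine ⟨D2, r0, hr0, hr1, fun r hr hrr => ?_⟩
  have := hD2 r hr hrr
  rwa [mul_div_cancel_left₀ _ two_ne_zero] at this

/-- quadratic remainder -/
lemma taylor_rem (α L : ℝ) (hα : 0 < α) (hL : 0 < L) :
    ∃ K, 0 ≤ K ∧ ∀ w, L / 2 ≤ w → w ≤ 2 * L →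
      |(|w| ^ α * w - L ^ α * w - α * L ^ α * (w - L))| ≤ K * (w - L) ^ 2 := by
  have d1 : ∀ w ∈ Set.Icc (L / 2) (2 * L), HasDerivAt (fun w : ℝ => w ^ α) (α * w ^ (α - 1)) w := by
    intro w hw
    exact Real.hasDerivAt_rpow_const (Or.inl (by linarith [hw.1]))
  have hcont : ContinuousOn (fun w : ℝ => α * w ^ (α - 1)) (Set.Icc (L / 2) (2 * L)) := by
    intro w hw
    apply ContinuousAt.continuousWithinAt
    exact continuousAt_const.mul (Real.continuousAt_rpow_const _ _ (Or.inl (by linarith [hw.1])))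
  obtain ⟨M, hM⟩ := isCompact_Icc.exists_bound_of_continuousOn hcont
  have hLm : L ∈ Set.Icc (L / 2) (2 * L) := ⟨by linarith, by linarith⟩
  have hM0 : 0 ≤ M := (norm_nonneg _).trans (hM L hLm)
  have lip : ∀ w ∈ Set.Icc (L / 2) (2 * L), |w ^ α - L ^ α| ≤ M * |w - L| := by
    intro w hw
    exact (convex_Icc (L / 2) (2 * L)).norm_image_sub_le_of_norm_hasDerivWithin_le
      (fun x hx => (d1 x hx).hasDerivWithinAt) hM hLm hw
  refine ⟨(α + 1) * M, by positivity, fun w h1 h2 => ?_⟩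
  have hw0 : 0 < w := by linarith
  set F : ℝ → ℝ := fun w => w ^ (α + 1) - L ^ α * w - α * L ^ α * (w - L) with hF
  have dF : ∀ x, 0 < x → HasDerivAt F ((α + 1) * (x ^ α - L ^ α)) x := by
    intro x hx
    have e1 : HasDerivAt (fun w : ℝ => w ^ (α + 1)) ((α + 1) * x ^ (α + 1 - 1)) x :=
      Real.hasDerivAt_rpow_const (Or.inl hx.ne')
    have e2 := (e1.sub ((hasDerivAt_id x).const_mul (L ^ α))).sub
      (((hasDerivAt_id x).sub_const L).const_mul (α * L ^ α))
    refine e2.congr_deriv ?_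
    rw [add_sub_cancel_right]; ring
  have hsub : Set.uIcc L w ⊆ Set.Icc (L / 2) (2 * L) :=
    (Set.ordConnected_Icc).uIcc_subset hLm ⟨h1, h2⟩
  have := (convex_uIcc L w).norm_image_sub_le_of_norm_hasDerivWithin_le (C := (α + 1) * M * |w - L|)
      (f := F) (fun x hx => (dF x (by linarith [(hsub hx).1])).hasDerivWithinAt) (by
        intro x hx
        rw [Real.norm_eq_abs, abs_mul, abs_of_pos (by linarith : 0 < α + 1), mul_assoc]
        apply mul_le_mul_of_nonneg_left _ (by linarith)
        refine (lip x (hsub hx)).trans ?_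
        apply mul_le_mul_of_nonneg_left _ hM0
        exact Set.abs_sub_left_of_mem_uIcc hx) Set.left_mem_uIcc Set.right_mem_uIcc
  have hFL : F L = 0 := by
    simp only [hF]; rw [Real.rpow_add_one hL.ne']; ring
  rw [hFL, sub_zero, Real.norm_eq_abs, Real.norm_eq_abs, mul_assoc, abs_mul_abs_self] at this
  rw [abs_of_pos hw0, ← Real.rpow_add_one hw0.ne', sq]
  exact this

/-- boundedness at infinity -/
lemma bdd_infty (α A β : ℝ) (hα : 0 < α) (hβ : 0 < β) (w q : ℝ → ℝ)
    (hw : ∀ r, 0 < r → HasDerivAt w (q r / r) r)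
    (hq : ∀ r, 0 < r → HasDerivAt q ((A * q r - r ^ 2 / 2 * q r + β * w r - |w r| ^ α * w r) / r) r)
    (r0 : ℝ) (hr0 : 0 < r0) : ∃ C, ∀ r, r0 ≤ r → |w r| ≤ C := by
  set R := max r0 (Real.sqrt (2 * A)) with hR
  have hRp : 0 < R := lt_of_lt_of_le hr0 (le_max_left _ _)
  set E : ℝ → ℝ := fun r => q r ^ 2 / 2 - β * w r ^ 2 / 2 + |w r| ^ (α + 2) / (α + 2) with hE
  have dE : ∀ r, 0 < r → HasDerivAt E ((A - r ^ 2 / 2) * q r ^ 2 / r) r := by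
    intro r hr
    have h1 := ((hq r hr).pow 2).div_const 2
    have h2 := (((hw r hr).pow 2).const_mul β).div_const 2
    have h3 := (((hasDerivAt_abs_rpow (w r) (by linarith : 1 < α + 2)).comp r (hw r hr))).div_const (α + 2)
    have h4 := (h1.sub h2).add h3
    refine h4.congr_deriv ?_
    rw [add_sub_cancel_right]
    push_cast
    field_simp
    ring
  have anti : AntitoneOn E (Set.Ici R) := by
    apply antitoneOn_of_deriv_nonpos (convex_Ici R)
    · intro r hr
      exact (dE r (hRp.trans_le hr)).continuousAt.continuousWithinAt
    · intro r hr
      rw [interior_Ici] at hr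
      exact (dE r (hRp.trans hr)).differentiableAt.differentiableWithinAt
    · intro r hr
      rw [interior_Ici] at hr
      have hrp := hRp.trans hr
      rw [(dE r hrp).deriv]
      have : 2 * A ≤ r ^ 2 := by
        have : Real.sqrt (2 * A) ≤ r := (le_max_right _ _).trans (le_of_lt hr)
        exact Real.sqrt_le_left hrp.le |>.1 this
      apply div_nonpos_of_nonpos_of_nonneg _ hrp.le
      apply mul_nonpos_of_nonpos_of_nonneg (by linarith) (sq_nonneg _)
  obtain ⟨M, hM⟩ := (isCompact_Icc (a := r0) (b := R)).exists_bound_of_continuousOn (f := w)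
    (fun r hr => (hw r (hr0.trans_le hr.1)).continuousAt.continuousWithinAt)
  set B := (α + 2) * (β / 2 + 1) with hB
  have hB0 : 0 < B := by positivity
  refine ⟨max M (max (B ^ (1 / α)) (Real.sqrt (E R))), fun r hr => ?_⟩
  by_cases hrR : r ≤ R
  · exact (hM r ⟨hr, hrR⟩).trans (le_max_left _ _)
  push Not at hrR
  refine le_trans ?_ (le_max_right _ _)
  by_cases hx : |w r| ≤ B ^ (1 / α)
  · exact hx.trans (le_max_left _ _)
  push Not at hx
  refine le_trans ?_ (le_max_right _ _)
  apply Real.abs_le_sqrt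
  have h1 := anti Set.self_mem_Ici hrR.le hrR.le
  refine le_trans ?_ h1
  have hxp : 0 < |w r| := (Real.rpow_pos_of_pos hB0 _).trans hx
  have h2 : B ≤ |w r| ^ α := by
    have := Real.rpow_le_rpow (Real.rpow_pos_of_pos hB0 _).le hx.le hα.le
    rwa [← Real.rpow_mul hB0.le, one_div_mul_cancel hα.ne', Real.rpow_one] at this
  have h3 : |w r| ^ (α + 2) = |w r| ^ α * w r ^ 2 := by
    rw [Real.rpow_add hxp, Real.rpow_two, sq_abs]
  simp only [hE]
  rw [h3]
  have h4 : (β / 2 + 1) * w r ^ 2 ≤ |w r| ^ α * w r ^ 2 / (α + 2) := by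
    rw [le_div_iff₀ (by positivity)]
    have := mul_le_mul_of_nonneg_right h2 (sq_nonneg (w r))
    rw [hB] at this
    linarith
  nlinarith [sq_nonneg (q r)]

lemma ode_facts (N α m β : ℝ) (hα : 0 < α) (hm : m = 2 / α) (hβ : β = m * (N - 2 - m))
    (f : ℝ → ℝ) (hfC2 : ContDiffOn ℝ 2 f (Set.Ioi 0))
    (hfode : ∀ r : ℝ, 0 < r →
      deriv (deriv f) r + ((N - 1) / r + r / 2) * deriv f r + f r / α
        + |f r| ^ α * f r = 0) (r : ℝ) (hr : 0 < r) :
    HasDerivAt (fun r => r ^ m * f r) (r ^ m * (m * f r + r * deriv f r) / r) r ∧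
    HasDerivAt (fun r => r ^ m * (m * f r + r * deriv f r))
      (((2 * m - (N - 2)) * (r ^ m * (m * f r + r * deriv f r))
        - r ^ 2 / 2 * (r ^ m * (m * f r + r * deriv f r)) + β * (r ^ m * f r)
        - |r ^ m * f r| ^ α * (r ^ m * f r)) / r) r := by
  have hf1 : HasDerivAt f (deriv f r) r :=
    ((hfC2.contDiffAt (Ioi_mem_nhds hr)).differentiableAt (by norm_num)).hasDerivAt
  have hf2 : HasDerivAt (deriv f) (deriv (deriv f) r) r := by
    have h1 : ContDiffOn ℝ 1 (deriv f) (Set.Ioi 0) :=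
      hfC2.deriv_of_isOpen isOpen_Ioi (by norm_num)
    exact ((h1.contDiffAt (Ioi_mem_nhds hr)).differentiableAt (by norm_num)).hasDerivAt
  have hrm : HasDerivAt (fun r : ℝ => r ^ m) (m * r ^ (m - 1)) r :=
    Real.hasDerivAt_rpow_const (Or.inl hr.ne')
  rw [Real.rpow_sub_one hr.ne'] at hrm
  constructor
  · refine (hrm.mul hf1).congr_deriv ?_
    field_simp
  · have h := hrm.mul ((hf1.const_mul m).add ((hasDerivAt_id r).mul hf2))
    refine h.congr_deriv ?_
    have hmp := Real.rpow_pos_of_pos hr m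
    have ea : |r ^ m * f r| ^ α = r ^ 2 * |f r| ^ α := by
      rw [abs_mul, abs_of_pos hmp, Real.mul_rpow hmp.le (abs_nonneg _), ← Real.rpow_mul hr.le, hm,
        div_mul_cancel₀ _ hα.ne', Real.rpow_two]
    have ef : |f r| ^ α * f r = - (deriv (deriv f) r + ((N - 1) / r + r / 2) * deriv f r + m / 2 * f r) := by
      have := hfode r hr
      have e : f r / α = m / 2 * f r := by rw [hm]; field_simp
      rw [e] at this; linarith
    have eb : |r ^ m * f r| ^ α * (r ^ m * f r) = r ^ m * r ^ 2 * (|f r| ^ α * f r) := by rw [ea]; ring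
    rw [eb, ef, hβ]
    simp only [Pi.add_apply, Pi.mul_apply, id]
    field_simp
    ring

lemma profile_est (N : ℕ) (hN : 3 ≤ N) (α α₀ β ρ : ℝ)
    (hα₀ : α₀ = 4 / ((N : ℝ) - 4 + 2 * Real.sqrt ((N : ℝ) - 1)))
    (hα1 : 2 / ((N : ℝ) - 2) < α) (hα2 : α < α₀)
    (hβ : β = 2 / α * ((N : ℝ) - 2 - 2 / α))
    (hρ : ρ = 2 / α - ((N : ℝ) - 2) / 2 - Real.sqrt (((N : ℝ) - 2) ^ 2 / 4 - β * (α + 1)))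
    (f : ℝ → ℝ) (hfC2 : ContDiffOn ℝ 2 f (Set.Ioi 0))
    (hfode : ∀ r : ℝ, 0 < r →
      deriv (deriv f) r + (((N : ℝ) - 1) / r + r / 2) * deriv f r + f r / α
        + |f r| ^ α * f r = 0)
    (hfsing : Tendsto (fun r : ℝ => r ^ (2 / α) * f r)
      (nhdsWithin 0 (Set.Ioi 0)) (nhds (β ^ (1 / α)))) :
    0 < α ∧ ∃ C : ℝ, ∀ r, 0 < r → |r ^ (2 / α) * f r - β ^ (1 / α)| ≤ C * (r / (r + 1)) ^ ρ := by
  have hN' : (3 : ℝ) ≤ N := by exact_mod_cast hN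
  have hα : 0 < α := lt_trans (div_pos two_pos (by linarith)) hα1
  refine ⟨hα, ?_⟩
  set n : ℝ := (N : ℝ) with hn
  set m := 2 / α with hm
  have hmpos : 0 < m := by positivity
  have hαm : α = 2 / m := by rw [hm]; field_simp
  have hm1 : m < n - 2 := by
    rw [hm, div_lt_iff₀ hα]
    rw [div_lt_iff₀ (by linarith)] at hα1
    linarith
  have hβ0 : 0 < β := by rw [hβ]; exact mul_pos hmpos (by linarith)
  set σ := Real.sqrt (n - 1) with hσ
  have hσ2 : σ ^ 2 = n - 1 := Real.sq_sqrt (by linarith)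
  have hσ1 : 1 < σ := by
    rw [hσ]; exact Real.lt_sqrt_of_sq_lt (by linarith)
  have hden : 0 < n - 4 + 2 * σ := by linarith
  have hm2 : (n - 4) / 2 + σ < m := by
    rw [hα₀, lt_div_iff₀ hden] at hα2
    rw [hm, lt_div_iff₀ hα]
    linarith
  have hαβ : α * β = 2 * (n - 2 - m) := by rw [hβ, hαm]; field_simp
  have hD : 0 < (n - 2) ^ 2 / 4 - β * (α + 1) := by
    have : (n - 2) ^ 2 / 4 - β * (α + 1) = (m - (n - 4) / 2) ^ 2 - σ ^ 2 := by
      have : β * (α + 1) = α * β + β := by ring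
      rw [this, hαβ, hβ, hσ2]; ring
    rw [this]
    nlinarith
  set s := Real.sqrt ((n - 2) ^ 2 / 4 - β * (α + 1)) with hs
  have hs0 : 0 < s := Real.sqrt_pos.2 hD
  have hs2 : s ^ 2 = (n - 2) ^ 2 / 4 - β * (α + 1) := Real.sq_sqrt hD.le
  have hprod : ρ * (ρ + 2 * s) = α * β := by
    have e : ρ * (ρ + 2 * s) = (m - (n - 2) / 2) ^ 2 - s ^ 2 := by rw [hρ]; ring
    have e2 : β * (α + 1) = α * β + β := by ring
    rw [e, hs2, e2]
    have : β = m * (n - 2 - m) := hβ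
    linear_combination this
  have hsum : ρ + (ρ + 2 * s) = 2 * m - (n - 2) := by rw [hρ]; ring
  have hρ0 : 0 < ρ := by
    by_contra hcon
    push Not at hcon
    have : 0 < ρ + 2 * s := by linarith
    have h1 := mul_nonpos_of_nonpos_of_nonneg hcon this.le
    rw [hprod] at h1
    have := mul_pos hα hβ0
    linarith
  set L := β ^ (1 / α) with hL
  have hL0 : 0 < L := Real.rpow_pos_of_pos hβ0 _
  have hLα : L ^ α = β := by
    rw [hL, ← Real.rpow_mul hβ0.le, one_div_mul_cancel hα.ne', Real.rpow_one]
  set w : ℝ → ℝ := fun r => r ^ m * f r with hw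
  set q : ℝ → ℝ := fun r => r ^ m * (m * f r + r * deriv f r) with hq
  have hode := ode_facts n α m β hα hm hβ f hfC2 hfode
  have hw' : ∀ r, 0 < r → HasDerivAt w (q r / r) r := fun r hr => (hode r hr).1
  have hq' : ∀ r, 0 < r → HasDerivAt q (((2 * m - (n - 2)) * q r - r ^ 2 / 2 * q r + β * w r
      - |w r| ^ α * w r) / r) r := fun r hr => (hode r hr).2
  obtain ⟨K, hK0, hK⟩ := taylor_rem α L hα hL0
  obtain ⟨rK, hrK, hrKw⟩ : ∃ rK, 0 < rK ∧ ∀ r, 0 < r → r ≤ rK → L / 2 ≤ w r ∧ w r ≤ 2 * L := by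
    have t3 := hfsing.eventually (Icc_mem_nhds (show L / 2 < L by linarith) (show L < 2 * L by linarith))
    rw [eventually_nhdsWithin_iff, Metric.eventually_nhds_iff] at t3
    obtain ⟨ε, hε, t4⟩ := t3
    refine ⟨ε / 2, by positivity, fun r hr hrr => t4 ?_ hr⟩
    rw [Real.dist_eq, sub_zero, abs_of_pos hr]; linarith
  obtain ⟨C1, r0, hr0, hr01, hC1⟩ := near_zero ρ (ρ + 2 * s) (K + 1) rK hρ0 (by linarith) (by linarith) hrK
    (fun r => w r - L) q
    (fun r => - (r ^ 2 / 2 * q r) - (|w r| ^ α * w r - L ^ α * w r - α * L ^ α * (w r - L)))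
    (fun r hr => (hw' r hr).sub_const L)
    (fun r hr => by
      refine (hq' r hr).congr_deriv ?_
      rw [hsum, hprod, hLα]; ring)
    (fun r hr hrr => by
      have hk := hK (w r) (hrKw r hr hrr).1 (hrKw r hr hrr).2
      have h1 := abs_sub (- (r ^ 2 / 2 * q r)) (|w r| ^ α * w r - L ^ α * w r - α * L ^ α * (w r - L))
      have h2 : |-(r ^ 2 / 2 * q r)| = r ^ 2 * |q r| / 2 := by
        rw [abs_neg, abs_mul, abs_of_pos (by positivity : 0 < r ^ 2 / 2)]; ring
      have h3 : 0 ≤ r ^ 2 * |q r| := by positivity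
      have h4 : 0 ≤ K * (r ^ 2 * |q r|) := by positivity
      have h5 := sq_nonneg (w r - L)
      linarith)
    (by simpa using hfsing.sub_const L)
  obtain ⟨C2, hC2⟩ := bdd_infty α (2 * m - (n - 2)) β hα hβ0 w q hw' hq' r0 hr0
  have hC20 : 0 ≤ C2 := (abs_nonneg _).trans (hC2 r0 le_rfl)
  refine ⟨max (|C1| * 2 ^ ρ) ((C2 + L) / (r0 / (r0 + 1)) ^ ρ), fun r hr => ?_⟩
  have hpos : 0 < (r / (r + 1)) ^ ρ := Real.rpow_pos_of_pos (by positivity) _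
  by_cases hrr : r ≤ r0
  · refine le_trans ?_ (mul_le_mul_of_nonneg_right (le_max_left _ _) hpos.le)
    refine (hC1 r hr hrr).trans ?_
    rw [mul_assoc, ← Real.mul_rpow (by norm_num) (by positivity)]
    have : r ≤ 2 * (r / (r + 1)) := by
      rw [← mul_div_assoc, le_div_iff₀ (by positivity)]; nlinarith
    have hle := Real.rpow_le_rpow hr.le this hρ0.le
    exact mul_le_mul (le_abs_self _) hle (Real.rpow_pos_of_pos hr _).le (abs_nonneg _)
  · push Not at hrr
    refine le_trans ?_ (mul_le_mul_of_nonneg_right (le_max_right _ _) hpos.le)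
    have h1 : |w r - L| ≤ C2 + L := by
      have := abs_sub (w r) L
      rw [abs_of_pos hL0] at this
      linarith [hC2 r hrr.le]
    have hp0 : 0 < (r0 / (r0 + 1)) ^ ρ := Real.rpow_pos_of_pos (by positivity) _
    have h2 : (r0 / (r0 + 1)) ^ ρ ≤ (r / (r + 1)) ^ ρ := by
      apply Real.rpow_le_rpow (by positivity) _ hρ0.le
      rw [div_le_div_iff₀ (by positivity) (by positivity)]; nlinarith
    refine h1.trans ?_
    rw [div_mul_eq_mul_div, le_div_iff₀ hp0]
    exact mul_le_mul_of_nonneg_left h2 (by linarith)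

theorem stmt_19 (N : ℕ) (hN : 3 ≤ N) (α α₀ β ρ : ℝ)
    (hα₀ : α₀ = 4 / ((N : ℝ) - 4 + 2 * Real.sqrt ((N : ℝ) - 1)))
    (hα1 : 2 / ((N : ℝ) - 2) < α) (hα2 : α < α₀)
    (hβ : β = 2 / α * ((N : ℝ) - 2 - 2 / α))
    (hρ : ρ = 2 / α - ((N : ℝ) - 2) / 2 - Real.sqrt (((N : ℝ) - 2) ^ 2 / 4 - β * (α + 1)))
    (f : ℝ → ℝ) (hfC2 : ContDiffOn ℝ 2 f (Set.Ioi 0))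
    (hfode : ∀ r : ℝ, 0 < r →
      deriv (deriv f) r + (((N : ℝ) - 1) / r + r / 2) * deriv f r + f r / α
        + |f r| ^ α * f r = 0)
    (hfsing : Tendsto (fun r : ℝ => r ^ (2 / α) * f r)
      (nhdsWithin 0 (Set.Ioi 0)) (nhds (β ^ (1 / α)))) :
    ∃ C : ℝ, ∀ t : ℝ, 0 < t → ∀ x : Euc N, x ≠ 0 →
      |‖x‖ ^ (2 / α) * (t ^ (-(1 / α)) * f (‖x‖ / Real.sqrt t)) - β ^ (1 / α)| ≤
        C * (‖x‖ / (‖x‖ + Real.sqrt t)) ^ ρ := by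
  obtain ⟨hα, C, hC⟩ := profile_est N hN α α₀ β ρ hα₀ hα1 hα2 hβ hρ f hfC2 hfode hfsing
  refine ⟨C, fun t ht x hx => ?_⟩
  have hx0 : 0 < ‖x‖ := norm_pos_iff.2 hx
  have hst : 0 < Real.sqrt t := Real.sqrt_pos.2 ht
  have h := hC (‖x‖ / Real.sqrt t) (by positivity)
  have e1 : ‖x‖ / Real.sqrt t / (‖x‖ / Real.sqrt t + 1) = ‖x‖ / (‖x‖ + Real.sqrt t) := by
    field_simp
  have e2 : (‖x‖ / Real.sqrt t) ^ (2 / α) = ‖x‖ ^ (2 / α) * t ^ (-(1 / α)) := by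
    rw [Real.div_rpow hx0.le hst.le, Real.sqrt_eq_rpow, ← Real.rpow_mul ht.le, Real.rpow_neg ht.le,
      div_eq_mul_inv]
    congr 3
    ring
  rw [e1, e2, mul_assoc] at h
  exact h

end
end
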